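/- arXiv:2105.04748 — 3 statements merged into one kernel-verified Lean document; each statement's English description precedes it below -/
import Mathlib

section
/- Let δ(x, y) = y³ − y·x³ (an E₇-type singular impasse curve). Let X = (P, Q) be real-analytic on a neighborhood of the origin in ℝ² with P(0,0) ≠ 0 and Q(x, 0) = 0 for all x in a neighborhood of 0. Then the constrained system (X, δ) is orientation-preserving C⁰-orbitally equivalent at (0, 0) to the constrained system (Y, δ), where Y is the constant vector field Y ≡ (P(0,0), 0). -/
/-- A phase curve of the vector field `X` in the set `V`: a differentiable curve
`c : J → V` on a nondegenerate interval `J` with `c'(t) = X(c(t))` for all `t ∈ J`. -/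
def IsPhaseCurve (X : ℝ × ℝ → ℝ × ℝ) (V : Set (ℝ × ℝ)) (J : Set ℝ) (c : ℝ → ℝ × ℝ) : Prop :=
  J.OrdConnected ∧ J.Nontrivial ∧ (∀ t ∈ J, c t ∈ V) ∧
    ∀ t ∈ J, HasDerivWithinAt c (X (c t)) J t

/-- The planar constrained systems `(X, δ)` and `(Y, γ)` are orientation-preserving
`C⁰`-orbitally equivalent at `(p₁, p₂)`: there are open neighborhoods `V₁ ∋ p₁`, `V₂ ∋ p₂`
and a homeomorphism `Φ : V₁ → V₂` sending `p₁` to `p₂` and impasse set to impasse set, which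
carries phase curves of `X` off the impasse set onto phase curves of `Y` off the impasse set
up to continuous strictly increasing reparametrizations, and conversely for `Φ⁻¹`. -/
def OrbitallyEquivAt (X : ℝ × ℝ → ℝ × ℝ) (δ : ℝ × ℝ → ℝ) (p₁ : ℝ × ℝ)
    (Y : ℝ × ℝ → ℝ × ℝ) (γ : ℝ × ℝ → ℝ) (p₂ : ℝ × ℝ) : Prop :=
  ∃ (V₁ V₂ : Set (ℝ × ℝ)) (Φ Φinv : ℝ × ℝ → ℝ × ℝ),
    IsOpen V₁ ∧ IsOpen V₂ ∧ p₁ ∈ V₁ ∧ p₂ ∈ V₂ ∧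
    -- Φ is a homeomorphism from V₁ onto V₂ with inverse Φinv
    ContinuousOn Φ V₁ ∧ ContinuousOn Φinv V₂ ∧
    Set.MapsTo Φ V₁ V₂ ∧ Set.MapsTo Φinv V₂ V₁ ∧
    (∀ z ∈ V₁, Φinv (Φ z) = z) ∧ (∀ z ∈ V₂, Φ (Φinv z) = z) ∧
    Φ p₁ = p₂ ∧
    -- Φ maps the impasse set to the impasse set
    Φ '' ({z | δ z = 0} ∩ V₁) = {z | γ z = 0} ∩ V₂ ∧
    -- Φ maps phase curves of X to phase curves of Y, preserving orientation
    (∀ (J : Set ℝ) (c : ℝ → ℝ × ℝ),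
      IsPhaseCurve X (V₁ \ {z | δ z = 0}) J c →
      ∃ (J' : Set ℝ) (d : ℝ → ℝ × ℝ) (τ : ℝ → ℝ),
        IsPhaseCurve Y (V₂ \ {z | γ z = 0}) J' d ∧
        ContinuousOn τ J ∧ StrictMonoOn τ J ∧ τ '' J = J' ∧
        ∀ t ∈ J, Φ (c t) = d (τ t)) ∧
    -- Φ⁻¹ maps phase curves of Y to phase curves of X, preserving orientation
    (∀ (J : Set ℝ) (d : ℝ → ℝ × ℝ),
      IsPhaseCurve Y (V₂ \ {z | γ z = 0}) J d →
      ∃ (J' : Set ℝ) (c : ℝ → ℝ × ℝ) (τ : ℝ → ℝ),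
        IsPhaseCurve X (V₁ \ {z | δ z = 0}) J' c ∧
        ContinuousOn τ J ∧ StrictMonoOn τ J ∧ τ '' J = J' ∧
        ∀ t ∈ J, Φinv (d t) = c (τ t))

open Set Filter Topology
open scoped NNReal

/-- triangular maps are injective and open -/
lemma tri_injOn {a b c d : ℝ} {f : ℝ × ℝ → ℝ}
    (hm : ∀ x ∈ Ioo a b, StrictMonoOn (fun y => f (x, y)) (Ioo c d)) :
    InjOn (fun z : ℝ × ℝ => (z.1, f z)) (Ioo a b ×ˢ Ioo c d) := by
  rintro ⟨x, y⟩ ⟨hx, hy⟩ ⟨x', y'⟩ ⟨hx', hy'⟩ h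
  simp only [Prod.mk.injEq] at h ⊢
  obtain ⟨rfl, h2⟩ := h
  exact ⟨rfl, (hm x hx).injOn hy hy' h2⟩

lemma tri_open {a b c d : ℝ} {f : ℝ × ℝ → ℝ} (hf : Continuous f)
    (hm : ∀ x ∈ Ioo a b, StrictMonoOn (fun y => f (x, y)) (Ioo c d))
    {W : Set (ℝ × ℝ)} (hW : IsOpen W) (hWU : W ⊆ Ioo a b ×ˢ Ioo c d) :
    IsOpen ((fun z : ℝ × ℝ => (z.1, f z)) '' W) := by
  rw [isOpen_iff_mem_nhds]
  rintro _ ⟨⟨x, y⟩, hz, rfl⟩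
  obtain ⟨e, he, hball⟩ := Metric.isOpen_iff.1 hW _ hz
  have hsub : ∀ x' y', |x' - x| < e → |y' - y| < e → (x', y') ∈ W := by
    intro x' y' h1 h2
    apply hball
    rw [← ball_prod_same]
    exact ⟨by simpa [Real.dist_eq] using h1, by simpa [Real.dist_eq] using h2⟩
  have hxy := hWU hz
  have hp : (x, y + e / 2) ∈ W := hsub _ _ (by simpa using he) (by
    rw [add_sub_cancel_left, abs_of_pos (by linarith)]; linarith)
  have hn : (x, y - e / 2) ∈ W := hsub _ _ (by simpa using he) (by
    rw [sub_sub_cancel_left, abs_neg, abs_of_pos (by linarith)]; linarith)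
  have h1 : f (x, y - e / 2) < f (x, y) :=
    hm x hxy.1 (hWU hn).2 hxy.2 (by linarith)
  have h2 : f (x, y) < f (x, y + e / 2) :=
    hm x hxy.1 hxy.2 (hWU hp).2 (by linarith)
  have c1 : ContinuousAt (fun q : ℝ × ℝ => f (q.1, y - e / 2)) (x, f (x, y)) := by fun_prop
  have c2 : ContinuousAt (fun q : ℝ × ℝ => f (q.1, y + e / 2)) (x, f (x, y)) := by fun_prop
  have e1 : ∀ᶠ q : ℝ × ℝ in 𝓝 (x, f (x, y)), f (q.1, y - e / 2) < q.2 :=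
    c1.eventually_lt (continuous_snd.continuousAt) h1
  have e2 : ∀ᶠ q : ℝ × ℝ in 𝓝 (x, f (x, y)), q.2 < f (q.1, y + e / 2) :=
    (continuous_snd.continuousAt).eventually_lt c2 h2
  have e3 : ∀ᶠ q : ℝ × ℝ in 𝓝 (x, f (x, y)), |q.1 - x| < e := by
    have : ContinuousAt (fun q : ℝ × ℝ => |q.1 - x|) (x, f (x, y)) := by fun_prop
    exact this.eventually_lt continuousAt_const (by simpa using he)
  filter_upwards [e1, e2, e3] with q q1 q2 q3
  have hc : ContinuousOn (fun t => f (q.1, t)) (Icc (y - e / 2) (y + e / 2)) := by fun_prop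
  obtain ⟨t, ht, hft⟩ := intermediate_value_Icc (by linarith) hc ⟨q1.le, q2.le⟩
  refine ⟨(q.1, t), hsub _ _ q3 ?_, ?_⟩
  · rw [abs_lt]; constructor <;> linarith [ht.1, ht.2]
  · exact Prod.ext rfl hft

lemma inv_cont {U : Set (ℝ × ℝ)} (hU : IsOpen U) {G : ℝ × ℝ → ℝ × ℝ} (hi : InjOn G U)
    (ho : ∀ W, IsOpen W → W ⊆ U → IsOpen (G '' W)) :
    ContinuousOn (Function.invFunOn G U) (G '' U) := by
  rw [continuousOn_iff']
  intro t ht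
  refine ⟨G '' (t ∩ U), ho _ (ht.inter hU) inter_subset_right, ?_⟩
  ext z
  constructor
  · rintro ⟨h1, z', hz', rfl⟩
    rw [mem_preimage, hi.leftInvOn_invFunOn hz'] at h1
    exact ⟨⟨z', ⟨h1, hz'⟩, rfl⟩, z', hz', rfl⟩
  · rintro ⟨⟨z', ⟨h1, h2⟩, rfl⟩, -⟩
    refine ⟨?_, z', h2, rfl⟩
    rwa [mem_preimage, hi.leftInvOn_invFunOn h2]

lemma ode_unique {J : Set ℝ} (hJ : J.OrdConnected) {v : ℝ → ℝ → ℝ} {K : ℝ≥0} {y z : ℝ → ℝ}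
    (hv : ∀ t ∈ J, LipschitzWith K (v t))
    (hy : ∀ t ∈ J, HasDerivWithinAt y (v t (y t)) J t)
    (hz : ∀ t ∈ J, HasDerivWithinAt z (v t (z t)) J t)
    {t₀ : ℝ} (ht₀ : t₀ ∈ J) (h0 : y t₀ = z t₀) : ∀ t ∈ J, y t = z t := by
  intro t ht
  have hcy : ContinuousOn y J := fun t ht => (hy t ht).continuousWithinAt
  have hcz : ContinuousOn z J := fun t ht => (hz t ht).continuousWithinAt
  rcases le_total t₀ t with h | h
  · have hs : Icc t₀ t ⊆ J := hJ.out ht₀ ht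
    have hm : ∀ x ∈ Ico t₀ t, J ∈ 𝓝[≥] x := fun x hx =>
      mem_of_superset (Icc_mem_nhdsGE hx.2) ((Icc_subset_Icc_left hx.1).trans hs)
    exact ODE_solution_unique_of_mem_Icc_right (v := v) (s := fun _ => univ) (K := K)
      (fun x hx => (hv x (hs ⟨hx.1, hx.2.le⟩)).lipschitzOnWith) (hcy.mono hs)
      (fun x hx => (hy x (hs ⟨hx.1, hx.2.le⟩)).mono_of_mem_nhdsWithin (hm x hx))
      (fun _ _ => trivial) (hcz.mono hs)
      (fun x hx => (hz x (hs ⟨hx.1, hx.2.le⟩)).mono_of_mem_nhdsWithin (hm x hx))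
      (fun _ _ => trivial) h0 ⟨h, le_rfl⟩
  · have hs : Icc t t₀ ⊆ J := hJ.out ht ht₀
    have hm : ∀ x ∈ Ioc t t₀, J ∈ 𝓝[≤] x := fun x hx =>
      mem_of_superset (Icc_mem_nhdsLE hx.1) ((Icc_subset_Icc_right hx.2).trans hs)
    exact ODE_solution_unique_of_mem_Icc_left (v := v) (s := fun _ => univ) (K := K)
      (fun x hx => (hv x (hs ⟨hx.1.le, hx.2⟩)).lipschitzOnWith) (hcy.mono hs)
      (fun x hx => (hy x (hs ⟨hx.1.le, hx.2⟩)).mono_of_mem_nhdsWithin (hm x hx))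
      (fun _ _ => trivial) (hcz.mono hs)
      (fun x hx => (hz x (hs ⟨hx.1.le, hx.2⟩)).mono_of_mem_nhdsWithin (hm x hx))
      (fun _ _ => trivial) h0 ⟨le_rfl, h⟩

/-- clamp to `[-r, r]` -/
noncomputable def clampR (r x : ℝ) : ℝ := max (-r) (min r x)

lemma clampR_mem {r : ℝ} (hr : 0 ≤ r) (x : ℝ) : clampR r x ∈ Icc (-r) r :=
  ⟨le_max_left _ _, max_le (by linarith) (min_le_left _ _)⟩

lemma clampR_of_mem {r x : ℝ} (hx : x ∈ Icc (-r) r) : clampR r x = x := by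
  rw [clampR, min_eq_right hx.2, max_eq_right hx.1]

lemma clampR_cont (r : ℝ) : Continuous (clampR r) := by unfold clampR; fun_prop

lemma clampR_lip (r : ℝ) : LipschitzWith 1 (clampR r) := by
  have := (LipschitzWith.id (α := ℝ)).const_min r
  exact this.const_max (-r)

/-- the function `|y|^(2/3)` -/
noncomputable def wfun (y : ℝ) : ℝ := (y ^ 2) ^ ((1 : ℝ) / 3)

lemma wfun_cont : Continuous wfun := by
  unfold wfun
  exact (continuous_pow 2).rpow_const (fun x => Or.inr (by norm_num))

lemma wfun_nonneg (y : ℝ) : 0 ≤ wfun y := by unfold wfun; positivity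

lemma wfun_cube (y : ℝ) : wfun y ^ 3 = y ^ 2 := by
  unfold wfun
  rw [← Real.rpow_natCast, ← Real.rpow_mul (by positivity)]
  norm_num

lemma wfun_zero : wfun 0 = 0 := by
  have := wfun_cube 0
  simpa using this

lemma delta_iff (x y : ℝ) : y ^ 3 - y * x ^ 3 = 0 ↔ y = 0 ∨ x = wfun y := by
  have h : y ^ 3 - y * x ^ 3 = y * (wfun y ^ 3 - x ^ 3) := by rw [wfun_cube]; ring
  rw [h, mul_eq_zero, sub_eq_zero]
  have : Function.Injective (fun t : ℝ => t ^ 3) := (Odd.strictMono_pow (by decide)).injective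
  constructor
  · rintro (h | h)
    · exact Or.inl h
    · exact Or.inr (this h).symm
  · rintro (h | h)
    · exact Or.inl h
    · exact Or.inr (by rw [h])

lemma wfun_growth {K D y1 y2 : ℝ} (hK : 0 ≤ K) (hD : 0 < D) (hKD : K * D ≤ 1)
    (hw : 2 * K * wfun y1 < 1) (h : |y2| ≤ |y1| * Real.exp (K * D)) :
    wfun y2 < wfun y1 + D := by
  have hz : 0 ≤ K * D := by positivity
  set E := Real.exp (K * D) with hE
  have hE1 : 1 ≤ E := Real.one_le_exp hz
  have h2 : y2 ^ 2 ≤ (|y1| * E) ^ 2 := by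
    rw [← sq_abs y2]; exact pow_le_pow_left₀ (abs_nonneg _) h 2
  have h3 : wfun y2 ^ 3 ≤ (E * wfun y1) ^ 3 := by
    rw [wfun_cube, mul_pow, wfun_cube]
    refine h2.trans ?_
    rw [mul_pow, sq_abs]
    have : E ^ 2 ≤ E ^ 3 := pow_le_pow_right₀ hE1 (by norm_num)
    nlinarith [sq_nonneg y1]
  have h4 : wfun y2 ≤ E * wfun y1 :=
    le_of_pow_le_pow_left₀ (by norm_num) (mul_nonneg (by linarith) (wfun_nonneg _)) h3
  have h5 : E - 1 ≤ 2 * (K * D) := by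
    have := Real.abs_exp_sub_one_le (x := K * D) (by rwa [abs_of_nonneg hz])
    rw [abs_of_nonneg hz] at this
    exact (le_abs_self _).trans this
  nlinarith [wfun_nonneg y1]

lemma exists_flow {r : ℝ} (hr : 0 < r) {K : ℝ≥0} {F : ℝ → ℝ → ℝ}
    (hc : ∀ y, Continuous (fun x => F x y)) (hL : ∀ x, LipschitzWith K (F x))
    (hb : ∀ x y, |F x y| ≤ K * r) (h0 : ∀ x, F x 0 = 0) (hKr : 2 * K * r ≤ 1) :
    ∃ φ : ℝ → ℝ → ℝ, Continuous (fun z : ℝ × ℝ => φ z.1 z.2) ∧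
      (∀ x, φ x 0 = 0) ∧
      (∀ h ∈ Icc (-(r/2)) (r/2), ∀ x ∈ Ioo (-r) r,
        HasDerivAt (fun x => φ x h) (F x (φ x h)) x ∧ |φ x h| ≤ r) ∧
      (∀ x ∈ Ioo (-r) r, StrictMonoOn (φ x) (Icc (-(r/2)) (r/2))) ∧
      (∀ h ∈ Icc (-(r/2)) (r/2), ∀ x₁ ∈ Ioo (-r) r, ∀ x₂ ∈ Ioo (-r) r, x₁ ≤ x₂ →
        |φ x₂ h| ≤ |φ x₁ h| * Real.exp (K * (x₂ - x₁))) := by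
  have h0mem : (0 : ℝ) ∈ Icc (-r) r := ⟨by linarith, hr.le⟩
  obtain ⟨R, hR⟩ : ∃ R : ℝ≥0, (R : ℝ) = r := ⟨⟨r, hr.le⟩, rfl⟩
  obtain ⟨R2, hR2⟩ : ∃ R2 : ℝ≥0, (R2 : ℝ) = r / 2 := ⟨⟨r / 2, by positivity⟩, rfl⟩
  have hPL : IsPicardLindelof F (⟨0, h0mem⟩ : Icc (-r) r) (0 : ℝ) R R2 (K * R) K :=
    { lipschitzOnWith := fun t _ => (hL t).lipschitzOnWith
      continuousOn := fun x _ => (hc x).continuousOn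
      norm_le := fun t _ x _ => by simpa [hR] using hb t x
      mul_max_le := by
        simp only [NNReal.coe_mul, hR, hR2, sub_zero, zero_sub, neg_neg, max_self]
        nlinarith }
  obtain ⟨α, hα, hαc⟩ := hPL.exists_forall_mem_closedBall_eq_hasDerivWithinAt_continuousOn
  have hball : Metric.closedBall (0 : ℝ) (R2 : ℝ)
      = Icc (-(r/2)) (r/2) := by
    simp [Real.closedBall_eq_Icc, hR2]
  rw [hball] at hα hαc
  have hr2 : (0:ℝ) ≤ r / 2 := by positivity
  have h0mem2 : (0 : ℝ) ∈ Icc (-(r/2)) (r/2) := ⟨by linarith, hr2⟩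
  -- zero is a solution
  have hβ0 : ∀ x ∈ Icc (-r) r, α (0, x) = 0 := by
    refine ode_unique (z := fun _ => 0) (v := F) (K := K) ordConnected_Icc (fun t _ => hL t)
      (hα 0 h0mem2).2 ?_ h0mem ?_
    · intro t ht
      simp only [h0]
      exact hasDerivWithinAt_const _ _ _
    · exact (hα 0 h0mem2).1
  have heq : ∀ h ∈ Icc (-(r/2)) (r/2), ∀ x ∈ Icc (-r) r,
      α (clampR (r/2) h, clampR r x) = α (h, x) := fun h hh x hx => by
    rw [clampR_of_mem hh, clampR_of_mem hx]
  have hder : ∀ h ∈ Icc (-(r/2)) (r/2), ∀ x ∈ Ioo (-r) r,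
      HasDerivAt (fun x => α (clampR (r/2) h, clampR r x))
        (F x (α (clampR (r/2) h, clampR r x))) x := fun h hh x hx => by
    have hnhds : Icc (-r) r ∈ 𝓝 x := Icc_mem_nhds hx.1 hx.2
    have h1 : HasDerivAt (fun x => α (h, x)) (F x (α (h, x))) x :=
      ((hα h hh).2 x ⟨hx.1.le, hx.2.le⟩).hasDerivAt hnhds
    rw [heq h hh x ⟨hx.1.le, hx.2.le⟩]
    refine h1.congr_of_eventuallyEq ?_
    filter_upwards [hnhds] with x' hx'
    exact heq h hh x' hx'
  have hcont : Continuous (fun z : ℝ × ℝ => α (clampR (r/2) z.2, clampR r z.1)) := by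
    refine hαc.comp_continuous (f := fun z : ℝ × ℝ => (clampR (r/2) z.2, clampR r z.1)) ?_ ?_
    · exact ((clampR_cont _).comp continuous_snd).prodMk ((clampR_cont _).comp continuous_fst)
    · exact fun z => ⟨clampR_mem hr2 _, clampR_mem hr.le _⟩
  refine ⟨fun x h => α (clampR (r/2) h, clampR r x), hcont, ?_, ?_, ?_, ?_⟩
  · intro x
    simp only [clampR_of_mem h0mem2]
    exact hβ0 _ (clampR_mem hr.le _)
  · intro h hh x hx
    refine ⟨hder h hh x hx, ?_⟩
    have hx' := Ioo_subset_Icc_self hx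
    simp only [heq h hh x hx']
    have := (convex_Icc (-r) r).norm_image_sub_le_of_norm_hasDerivWithin_le (C := K * r)
      (hα h hh).2 (fun x _ => by simpa using hb _ _) h0mem hx'
    have h00 : α (h, 0) = h := (hα h hh).1
    rw [h00, Real.norm_eq_abs, Real.norm_eq_abs, sub_zero] at this
    have hxr : |x| ≤ r := abs_le.2 hx'
    have hhr : |h| ≤ r / 2 := abs_le.2 hh
    have h3 : K * r * |x| ≤ K * r * r := by gcongr
    have h4 : |α (h, x)| ≤ |α (h, x) - h| + |h| := by
      simpa using abs_add_le (α (h, x) - h) h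
    nlinarith
  · intro x hx h hh h' hh' hlt
    have hx' := Ioo_subset_Icc_self hx
    simp only [heq h hh x hx', heq h' hh' x hx']
    by_contra! hcon
    have hcd : ContinuousOn (fun x => α (h', x) - α (h, x)) (Icc (-r) r) := fun t ht =>
      ((hα h' hh').2 t ht).continuousWithinAt.sub ((hα h hh).2 t ht).continuousWithinAt
    have hpc : IsPreconnected (Icc (-r) r) := isPreconnected_Icc
    have h00 : α (h, 0) = h := (hα h hh).1
    have h00' : α (h', 0) = h' := (hα h' hh').1
    obtain ⟨t, ht, hte⟩ := hpc.intermediate_value hx' h0mem hcd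
      (show (0:ℝ) ∈ Icc _ _ from ⟨by simpa using hcon, by simp only [h00, h00']; linarith⟩)
    have := ode_unique (v := F) (K := K) ordConnected_Icc (fun t _ => hL t)
      (hα h' hh').2 (hα h hh).2 ht (by simpa [sub_eq_zero] using hte) 0 h0mem
    rw [h00, h00'] at this
    linarith
  · intro h hh x₁ hx₁ x₂ hx₂ hle
    have hin : ∀ t ∈ Icc x₁ x₂, t ∈ Ioo (-r) r := fun t ht =>
      ⟨hx₁.1.trans_le ht.1, ht.2.trans_lt hx₂.2⟩
    have := dist_le_of_trajectories_ODE (v := F) (K := K) (a := x₁) (b := x₂)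
      (f := fun x => α (clampR (r/2) h, clampR r x)) (g := fun _ => 0)
      (δ := |α (clampR (r/2) h, clampR r x₁)|) hL
      (fun t ht => (hder h hh t (hin t ht)).continuousAt.continuousWithinAt)
      (fun t ht => (hder h hh t (hin t (Ico_subset_Icc_self ht))).hasDerivWithinAt)
      continuousOn_const
      (fun t ht => by simpa only [h0] using hasDerivWithinAt_const _ _ _)
      (by simp) x₂ ⟨hle, le_rfl⟩
    simpa using this

lemma exists_setup (P Q : ℝ × ℝ → ℝ)
    (hP : AnalyticAt ℝ P (0, 0)) (hQ : AnalyticAt ℝ Q (0, 0))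
    (hP0 : P (0, 0) ≠ 0)
    (hQ0 : ∀ᶠ x in nhds (0 : ℝ), Q (x, 0) = 0) :
    ∃ (r : ℝ) (K M : ℝ≥0) (F p : ℝ → ℝ → ℝ), 0 < r ∧
      Continuous (fun z : ℝ × ℝ => p z.1 z.2) ∧ (∀ x y, 0 < P (0, 0) * p x y) ∧
      (∀ x y, |p x y| ≤ M) ∧
      (∀ x ∈ Icc (-r) r, ∀ y ∈ Icc (-r) r, P (x, y) = p x y ∧ Q (x, y) = F x y * p x y) ∧
      (∀ y, Continuous (fun x => F x y)) ∧ (∀ x, LipschitzWith K (F x)) ∧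
      (∀ x y, |F x y| ≤ K * r) ∧ (∀ x, F x 0 = 0) ∧ 2 * K * r ≤ 1 ∧
      (∀ y, |y| ≤ r → 2 * K * wfun y < 1) := by
  have hf : AnalyticAt ℝ (Q / P) (0, 0) := hQ.div hP hP0
  obtain ⟨K, t, ht, hK⟩ := (hf.contDiffAt (n := 1)).exists_lipschitzOnWith
  have e1 : ∀ᶠ z in 𝓝 ((0 : ℝ), (0 : ℝ)), 0 < P (0, 0) * P z := by
    have : ContinuousAt (fun z => P (0, 0) * P z) (0, 0) :=
      continuousAt_const.mul hP.continuousAt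
    exact continuousAt_const.eventually_lt this (mul_self_pos.2 hP0)
  have e2 : ∀ᶠ z in 𝓝 ((0 : ℝ), (0 : ℝ)), |P z| < |P (0, 0)| + 1 :=
    hP.continuousAt.abs.eventually_lt continuousAt_const (by linarith)
  have e3 := hP.eventually_analyticAt
  obtain ⟨r1, hr1, H1⟩ := Metric.eventually_nhds_iff_ball.1 (((e1.and e2).and e3).and ht)
  obtain ⟨r2, hr2, H2⟩ := Metric.eventually_nhds_iff_ball.1 hQ0
  have e4 : ∀ᶠ y in 𝓝 (0 : ℝ), 2 * (K : ℝ) * wfun y < 1 :=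
    (continuousAt_const.mul wfun_cont.continuousAt).eventually_lt continuousAt_const
      (by simp [wfun_zero])
  obtain ⟨r3, hr3, H3⟩ := Metric.eventually_nhds_iff_ball.1 e4
  obtain ⟨r, hr, hl1, hl2, hl3, hl4⟩ : ∃ r : ℝ, 0 < r ∧ r < r1 ∧ r < r2 ∧ r < r3 ∧
      2 * K * r ≤ 1 := by
    have hKp : (0 : ℝ) < 2 * K + 1 := by positivity
    have hm : 0 < min (min r1 r2) (min r3 (1 / (2 * K + 1))) := by positivity
    refine ⟨min (min r1 r2) (min r3 (1 / (2 * K + 1))) / 2, by positivity, ?_, ?_, ?_, ?_⟩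
    · linarith [min_le_left (min r1 r2) (min r3 (1 / (2 * (K : ℝ) + 1))), min_le_left r1 r2]
    · linarith [min_le_left (min r1 r2) (min r3 (1 / (2 * (K : ℝ) + 1))), min_le_right r1 r2]
    · linarith [min_le_right (min r1 r2) (min r3 (1 / (2 * (K : ℝ) + 1))),
        min_le_left r3 (1 / (2 * (K : ℝ) + 1))]
    · have h5 : min (min r1 r2) (min r3 (1 / (2 * (K : ℝ) + 1))) / 2 ≤ 1 / (2 * K + 1) := by
        linarith [min_le_right (min r1 r2) (min r3 (1 / (2 * (K : ℝ) + 1))),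
          min_le_right r3 (1 / (2 * (K : ℝ) + 1))]
      calc 2 * (K : ℝ) * _ ≤ 2 * K * (1 / (2 * K + 1)) := by gcongr
        _ ≤ 1 := by
          rw [mul_one_div, div_le_one hKp]; linarith
  have hbox : ∀ x ∈ Icc (-r) r, ∀ y ∈ Icc (-r) r, (x, y) ∈ Metric.ball ((0 : ℝ), (0 : ℝ)) r1 := by
    intro x hx y hy
    rw [← ball_prod_same]
    constructor
    · simpa [Real.dist_eq] using (abs_le.2 hx).trans_lt hl1
    · simpa [Real.dist_eq] using (abs_le.2 hy).trans_lt hl1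
  have hcl := clampR_mem hr.le
  have h0mem : (0 : ℝ) ∈ Icc (-r) r := ⟨by linarith, hr.le⟩
  have hF0 : ∀ x, (Q / P) (clampR r x, clampR r 0) = 0 := by
    intro x
    rw [clampR_of_mem h0mem, Pi.div_apply, H2 _ (by
      simpa [Real.dist_eq] using (abs_le.2 (hcl x)).trans_lt hl2), zero_div]
  have hLip : ∀ x y y', |(Q / P) (clampR r x, clampR r y) - (Q / P) (clampR r x, clampR r y')|
      ≤ K * |clampR r y - clampR r y'| := by
    intro x y y'
    have := hK.dist_le_mul _ (H1 _ (hbox _ (hcl x) _ (hcl y))).2 _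
      (H1 _ (hbox _ (hcl x) _ (hcl y'))).2
    simpa [Prod.dist_eq, Real.dist_eq] using this
  refine ⟨r, K, ⟨|P (0, 0)| + 1, by positivity⟩, fun x y => (Q / P) (clampR r x, clampR r y),
    fun x y => P (clampR r x, clampR r y), hr, ?_, ?_, ?_, ?_, ?_, ?_, ?_, hF0, hl4, ?_⟩
  · have hc : ContinuousOn P (Metric.ball ((0 : ℝ), (0 : ℝ)) r1) := fun z hz =>
      (H1 z hz).1.2.continuousAt.continuousWithinAt
    refine hc.comp_continuous (f := fun z : ℝ × ℝ => (clampR r z.1, clampR r z.2)) ?_ ?_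
    · exact ((clampR_cont _).comp continuous_fst).prodMk ((clampR_cont _).comp continuous_snd)
    · exact fun z => hbox _ (hcl _) _ (hcl _)
  · exact fun x y => (H1 _ (hbox _ (hcl x) _ (hcl y))).1.1.1
  · exact fun x y => (H1 _ (hbox _ (hcl x) _ (hcl y))).1.1.2.le
  · intro x hx y hy
    simp only [clampR_of_mem hx, clampR_of_mem hy, Pi.div_apply, true_and]
    have : P (x, y) ≠ 0 := by
      intro h
      have := (H1 _ (hbox _ hx _ hy)).1.1.1
      simp [h] at this
    field_simp
  · intro y
    refine hK.continuousOn.comp_continuous (f := fun x : ℝ => (clampR r x, clampR r y)) ?_ ?_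
    · exact (clampR_cont _).prodMk continuous_const
    · exact fun x => (H1 _ (hbox _ (hcl x) _ (hcl y))).2
  · intro x
    refine LipschitzWith.of_dist_le_mul fun y y' => ?_
    rw [Real.dist_eq]
    refine (hLip x y y').trans ?_
    have := (clampR_lip r).dist_le_mul y y'
    rw [Real.dist_eq, NNReal.coe_one, one_mul] at this
    gcongr
  · intro x y
    have := hLip x y 0
    rw [hF0, clampR_of_mem h0mem, sub_zero, sub_zero] at this
    refine this.trans ?_
    have := abs_le.2 (hcl y)
    gcongr
  · intro y hy
    exact H3 y (by simpa [Real.dist_eq] using hy.trans_lt hl3)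

lemma sgn_lt {p a b a' b' : ℝ} (hp : p ≠ 0) (h : p * a < p * b) (H1 : a < b → a' < b')
    (H2 : b < a → b' < a') : p * a' < p * b' := by
  rcases lt_or_gt_of_ne hp with h0 | h0
  · exact mul_lt_mul_of_neg_left (H2 (lt_of_mul_lt_mul_of_nonpos_left h h0.le)) h0
  · exact mul_lt_mul_of_pos_left (H1 (lt_of_mul_lt_mul_of_nonneg_left h h0.le)) h0

lemma sgn_div {p a b : ℝ} (hp : p ≠ 0) (h : p * a < p * b) : a / p < b / p := by
  have h2 : 0 < p ^ 2 := by positivity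
  have e1 : a / p = p * a / p ^ 2 := by field_simp
  have e2 : b / p = p * b / p ^ 2 := by field_simp
  rw [e1, e2]
  exact div_lt_div_of_pos_right h h2

lemma hd_fst {c : ℝ → ℝ × ℝ} {v : ℝ × ℝ} {J : Set ℝ} {t : ℝ} (h : HasDerivWithinAt c v J t) :
    HasDerivWithinAt (fun t => (c t).1) v.1 J t :=
  (hasFDerivAt_fst (𝕜 := ℝ) (p := c t)).comp_hasDerivWithinAt t h

lemma hd_snd {c : ℝ → ℝ × ℝ} {v : ℝ × ℝ} {J : Set ℝ} {t : ℝ} (h : HasDerivWithinAt c v J t) :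
    HasDerivWithinAt (fun t => (c t).2) v.2 J t :=
  (hasFDerivAt_snd (𝕜 := ℝ) (p := c t)).comp_hasDerivWithinAt t h

lemma image_interval {J : Set ℝ} {τ : ℝ → ℝ} (hJ : J.OrdConnected) (hn : J.Nontrivial)
    (hc : ContinuousOn τ J) (hm : StrictMonoOn τ J) :
    (τ '' J).OrdConnected ∧ (τ '' J).Nontrivial :=
  ⟨(hJ.isPreconnected.image τ hc).ordConnected, hn.image_of_injOn hm.injOn⟩

theorem E7_case8 (P Q : ℝ × ℝ → ℝ)
    (hP : AnalyticAt ℝ P (0, 0)) (hQ : AnalyticAt ℝ Q (0, 0))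
    (hP0 : P (0, 0) ≠ 0)
    (hQ0 : ∀ᶠ x in nhds (0 : ℝ), Q (x, 0) = 0) :
    OrbitallyEquivAt (fun z => (P z, Q z))
      (fun z => z.2 ^ 3 - z.2 * z.1 ^ 3) (0, 0)
      (fun _ => (P (0, 0), (0 : ℝ)))
      (fun z => z.2 ^ 3 - z.2 * z.1 ^ 3) (0, 0) := by
  obtain ⟨r, K, M, F, p, hr, hpc, hpp, hpM, hPQ, hFc, hFL, hFb, hF0, hKr, hw⟩ :=
    exists_setup P Q hP hQ hP0 hQ0
  obtain ⟨φ, hφc, hφ0, hφd, hφm, hφg⟩ := exists_flow hr hFc hFL hFb hF0 hKr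
  set p0 := P (0, 0) with hp0
  let U : Set (ℝ × ℝ) := Ioo (-r) r ×ˢ Ioo (-(r/2)) (r/2)
  have hU : IsOpen U := isOpen_Ioo.prod isOpen_Ioo
  let s : ℝ × ℝ → ℝ := fun z => z.1 - wfun (φ z.1 z.2) + wfun z.2
  have hsc : Continuous s :=
    (continuous_fst.sub (wfun_cont.comp hφc)).add (wfun_cont.comp continuous_snd)
  let Ψ : ℝ × ℝ → ℝ × ℝ := fun z => (z.1, φ z.1 z.2)
  let S : ℝ × ℝ → ℝ × ℝ := fun z => (s z, z.2)
  have hΨc : Continuous Ψ := continuous_fst.prodMk hφc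
  have hSc : Continuous S := hsc.prodMk continuous_snd
  -- monotonicity
  have hφm' : ∀ x ∈ Ioo (-r) r, StrictMonoOn (fun y => φ x y) (Ioo (-(r/2)) (r/2)) :=
    fun x hx => (hφm x hx).mono Ioo_subset_Icc_self
  have hsm : ∀ h ∈ Ioo (-(r/2)) (r/2), StrictMonoOn (fun x => s (x, h)) (Ioo (-r) r) := by
    intro h hh x₁ hx₁ x₂ hx₂ hlt
    have hh' := Ioo_subset_Icc_self hh
    have hK0 : (0 : ℝ) ≤ K := K.2
    have := wfun_growth (K := K) (D := x₂ - x₁) (y1 := φ x₁ h) (y2 := φ x₂ h) hK0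
      (by linarith) (by nlinarith [hx₁.1, hx₂.2]) (hw _ (hφd h hh' x₁ hx₁).2)
      (hφg h hh' x₁ hx₁ x₂ hx₂ hlt.le)
    simp only [s]
    linarith
  have hΨi : InjOn Ψ U := tri_injOn (f := fun z => φ z.1 z.2) hφm'
  have hΨo : ∀ W, IsOpen W → W ⊆ U → IsOpen (Ψ '' W) := fun W hW hWU =>
    tri_open (f := fun z => φ z.1 z.2) hφc hφm' hW hWU
  have hSi : InjOn S U := by
    rintro ⟨x, y⟩ ⟨hx, hy⟩ ⟨x', y'⟩ ⟨hx', hy'⟩ h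
    simp only [S, Prod.mk.injEq] at h ⊢
    obtain ⟨h1, rfl⟩ := h
    exact ⟨(hsm y hy).injOn hx hx' h1, rfl⟩
  have hSo : ∀ W, IsOpen W → W ⊆ U → IsOpen (S '' W) := by
    intro W hW hWU
    have h1 : IsOpen ((fun z : ℝ × ℝ => (z.1, s z.swap)) '' (Prod.swap ⁻¹' W)) :=
      tri_open (f := fun z => s z.swap) (hsc.comp continuous_swap) hsm
        (hW.preimage continuous_swap) (fun z hz => ⟨(hWU hz).2, (hWU hz).1⟩)
    have h2 := h1.preimage continuous_swap
    convert h2 using 1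
    ext ⟨a, b⟩
    constructor
    · rintro ⟨⟨x, y⟩, hz, he⟩
      simp only [S, Prod.mk.injEq] at he
      refine ⟨(y, x), hz, ?_⟩
      simp [← he.1, ← he.2]
    · rintro ⟨⟨y, x⟩, hz, he⟩
      simp only [Prod.swap_prod_mk, Prod.mk.injEq] at he
      refine ⟨(x, y), hz, ?_⟩
      simp [S, ← he.1, ← he.2]
  have hΨl : ∀ u ∈ U, Function.invFunOn Ψ U (Ψ u) = u := fun u hu => hΨi.leftInvOn_invFunOn hu
  have hSl : ∀ u ∈ U, Function.invFunOn S U (S u) = u := fun u hu => hSi.leftInvOn_invFunOn hu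
  have hΨ0 : Ψ (0, 0) = (0, 0) := by simp [Ψ, hφ0]
  have hS0 : S (0, 0) = (0, 0) := by simp [S, s, hφ0, wfun_zero]
  have h0U : ((0 : ℝ), (0 : ℝ)) ∈ U := ⟨⟨by simpa using hr, hr⟩, ⟨by simpa using hr, by simpa using hr⟩⟩
  have hΨinvm : MapsTo (Function.invFunOn Ψ U) (Ψ '' U) U := by
    rintro _ ⟨u, hu, rfl⟩; rwa [hΨl u hu]
  have hSinvm : MapsTo (Function.invFunOn S U) (S '' U) U := by
    rintro _ ⟨u, hu, rfl⟩; rwa [hSl u hu]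
  -- correspondence of impasse sets
  have hδ : ∀ u ∈ U, (Ψ u).2 ^ 3 - (Ψ u).2 * (Ψ u).1 ^ 3 = 0 ↔
      (S u).2 ^ 3 - (S u).2 * (S u).1 ^ 3 = 0 := by
    rintro ⟨x, h⟩ ⟨hx, hh⟩
    rw [delta_iff, delta_iff]
    simp only [Ψ, S, s]
    have h1 : φ x h = 0 ↔ h = 0 := by
      constructor
      · intro h1
        exact (hφm' x hx).injOn hh ⟨by simpa using hr, by simpa using hr⟩ (by simp [h1, hφ0])
      · rintro rfl; exact hφ0 x
    rw [h1]
    refine or_congr Iff.rfl ?_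
    constructor <;> intro h2 <;> linarith
  refine ⟨Ψ '' U, S '' U, fun z => S (Function.invFunOn Ψ U z),
    fun z => Ψ (Function.invFunOn S U z), hΨo U hU Subset.rfl, hSo U hU Subset.rfl,
    ⟨_, h0U, hΨ0⟩, ⟨_, h0U, hS0⟩, hSc.comp_continuousOn (inv_cont hU hΨi hΨo),
    hΨc.comp_continuousOn (inv_cont hU hSi hSo), ?_, ?_, ?_, ?_, ?_, ?_, ?_, ?_⟩
  · exact fun z hz => ⟨_, hΨinvm hz, rfl⟩
  · exact fun z hz => ⟨_, hSinvm hz, rfl⟩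
  · rintro _ ⟨u, hu, rfl⟩
    simp only [hΨl u hu, hSl u hu]
  · rintro _ ⟨u, hu, rfl⟩
    simp only [hΨl u hu, hSl u hu]
  · have := hΨl _ h0U
    rw [hΨ0] at this
    simp only [this, hS0]
  · ext z
    constructor
    · rintro ⟨_, ⟨hz, u, hu, rfl⟩, rfl⟩
      simp only [hΨl u hu]
      exact ⟨(hδ u hu).1 hz, u, hu, rfl⟩
    · rintro ⟨hz, u, hu, rfl⟩
      exact ⟨Ψ u, ⟨(hδ u hu).2 hz, u, hu, rfl⟩, by simp only [hΨl u hu]⟩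
  · -- forward
    rintro J c ⟨hJ, hJn, hcV, hcd⟩
    obtain ⟨t₀, ht₀⟩ := hJn.nonempty
    have hex : ∀ t ∈ J, ∃ h, ((c t).1, h) ∈ U ∧ φ (c t).1 h = (c t).2 := by
      intro t ht
      obtain ⟨⟨u, hu, he⟩, -⟩ := hcV t ht
      refine ⟨u.2, ?_, ?_⟩
      · rw [← he]; exact hu
      · rw [← he]
    obtain ⟨h, hhU, hh0⟩ := hex t₀ ht₀
    have hh : h ∈ Ioo (-(r/2)) (r/2) := hhU.2
    have hh' := Ioo_subset_Icc_self hh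
    have hxI : ∀ t ∈ J, (c t).1 ∈ Ioo (-r) r := fun t ht => by
      obtain ⟨h, h1, -⟩ := hex t ht; exact h1.1
    have hyI : ∀ t ∈ J, (c t).2 ∈ Icc (-r) r := fun t ht => by
      obtain ⟨h, h1, h2⟩ := hex t ht
      rw [← h2]
      exact abs_le.1 (hφd h (Ioo_subset_Icc_self h1.2) _ h1.1).2
    have hPQt : ∀ t ∈ J, P (c t) = p (c t).1 (c t).2 ∧
        Q (c t) = F (c t).1 (c t).2 * p (c t).1 (c t).2 := fun t ht =>
      hPQ _ (Ioo_subset_Icc_self (hxI t ht)) _ (hyI t ht)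
    have hx' : ∀ t ∈ J, HasDerivWithinAt (fun t => (c t).1) (P (c t)) J t :=
      fun t ht => hd_fst (hcd t ht)
    have hyφ : ∀ t ∈ J, (c t).2 = φ (c t).1 h := by
      refine ode_unique (K := K * M) (v := fun t y => F (c t).1 y * p (c t).1 (c t).2)
        (z := fun t => φ (c t).1 h) hJ ?_ ?_ ?_ ht₀ hh0.symm
      · intro t ht
        refine LipschitzWith.of_dist_le_mul fun y y' => ?_
        have h1 := (hFL (c t).1).dist_le_mul y y'
        rw [Real.dist_eq] at h1 ⊢
        rw [← sub_mul, abs_mul, NNReal.coe_mul]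
        calc _ ≤ (K * dist y y') * M := by
              gcongr
              exact hpM _ _
          _ = _ := by ring
      · intro t ht
        have := hd_snd (hcd t ht)
        simp only [(hPQt t ht).2] at this
        exact this
      · intro t ht
        have h1 := (hφd h hh' _ (hxI t ht)).1
        have h2 := h1.comp_hasDerivWithinAt t (hx' t ht)
        rw [(hPQt t ht).1] at h2
        exact h2
    have hcΨ : ∀ t ∈ J, c t = Ψ ((c t).1, h) := fun t ht => Prod.ext rfl (hyφ t ht)
    have hin : ∀ t ∈ J, ((c t).1, h) ∈ U := fun t ht => ⟨hxI t ht, hh⟩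
    have hΦ : ∀ t ∈ J, S (Function.invFunOn Ψ U (c t)) = (s ((c t).1, h), h) := by
      intro t ht
      have := hΨl _ (hin t ht)
      rw [← hcΨ t ht] at this
      rw [this]
    have hcx : ContinuousOn (fun t => (c t).1) J := fun t ht => (hx' t ht).continuousWithinAt
    have hτc : ContinuousOn (fun t => s ((c t).1, h) / p0) J :=
      (hsc.comp_continuousOn (hcx.prodMk continuousOn_const)).div_const _
    have hxm : StrictMonoOn (fun t => p0 * (c t).1) J := by
      refine strictMonoOn_of_hasDerivWithinAt_pos (f' := fun t => p0 * P (c t)) hJ.convex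
        (continuousOn_const.mul hcx) ?_ ?_
      · intro t ht
        exact ((hx' t (interior_subset ht)).mono interior_subset).const_mul p0
      · intro t ht
        rw [(hPQt t (interior_subset ht)).1]
        exact hpp _ _
    have hτm : StrictMonoOn (fun t => s ((c t).1, h) / p0) J := by
      intro t ht t' ht' hlt
      exact sgn_div hP0 (sgn_lt hP0 (hxm ht ht' hlt)
        (fun hh1 => hsm h hh (hxI t ht) (hxI t' ht') hh1)
        (fun hh1 => hsm h hh (hxI t' ht') (hxI t ht) hh1))
    have hval : ∀ t ∈ J, S (Function.invFunOn Ψ U (c t)) = (p0 * (s ((c t).1, h) / p0), h) := by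
      intro t ht
      rw [hΦ t ht, mul_div_cancel₀ _ hP0]
    obtain ⟨hJ1, hJ2⟩ := image_interval hJ hJn hτc hτm
    refine ⟨_, fun x => (p0 * x, h), fun t => s ((c t).1, h) / p0,
      ⟨hJ1, hJ2, ?_, ?_⟩, hτc, hτm, rfl, hval⟩
    · rintro _ ⟨t, ht, rfl⟩
      simp only [← hval t ht]
      have h1 := hΨl _ (hin t ht)
      rw [← hcΨ t ht] at h1
      rw [h1]
      refine ⟨⟨_, hin t ht, rfl⟩, fun hcon => (hcV t ht).2 ?_⟩
      rw [hcΨ t ht]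
      exact (hδ _ (hin t ht)).2 hcon
    · intro x _
      have h1 : HasDerivAt (fun x => p0 * x) p0 x := by
        simpa using (hasDerivAt_id x).const_mul p0
      exact (h1.prodMk (hasDerivAt_const x h)).hasDerivWithinAt
  · -- backward
    rintro J d ⟨hJ, hJn, hdV, hdd⟩
    obtain ⟨t₀, ht₀⟩ := hJn.nonempty
    have hd2 : ∀ t ∈ J, (d t).2 = (d t₀).2 := by
      intro t ht
      have := Convex.norm_image_sub_le_of_norm_hasDerivWithin_le (C := 0)
        (fun t ht => hd_snd (hdd t ht)) (fun t _ => by simp) hJ.convex ht₀ ht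
      rw [zero_mul, norm_le_zero_iff, sub_eq_zero] at this
      exact this
    have hdc : ContinuousOn d J := fun t ht => (hdd t ht).continuousWithinAt
    have hd1 : StrictMonoOn (fun t => p0 * (d t).1) J := by
      refine strictMonoOn_of_hasDerivWithinAt_pos (f' := fun t => p0 * p0) hJ.convex
        (continuousOn_const.mul (continuous_fst.comp_continuousOn hdc)) ?_ ?_
      · intro t ht
        exact ((hd_fst (hdd t (interior_subset ht))).mono interior_subset).const_mul p0
      · intro t ht
        exact mul_self_pos.2 hP0
    set h := (d t₀).2 with hhdef
    let x : ℝ → ℝ := fun t => (Function.invFunOn S U (d t)).1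
    have hxc : ContinuousOn x J := continuous_fst.comp_continuousOn
      ((inv_cont hU hSi hSo).comp hdc (fun t ht => (hdV t ht).1))
    have hkey : ∀ t ∈ J, Function.invFunOn S U (d t) = (x t, h) ∧ (x t, h) ∈ U ∧
        S (x t, h) = d t := by
      intro t ht
      obtain ⟨⟨u, hu, he⟩, -⟩ := hdV t ht
      have h1 : Function.invFunOn S U (d t) = u := by rw [← he]; exact hSl u hu
      have h2 : u = (x t, h) := by
        refine Prod.ext ?_ ?_
        · simp only [x, h1]
        · rw [← hd2 t ht, ← he]
      rw [← h2]
      exact ⟨h1, hu, he⟩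
    have hh : h ∈ Ioo (-(r/2)) (r/2) := (hkey t₀ ht₀).2.1.2
    have hh' := Ioo_subset_Icc_self hh
    have hxI : ∀ t ∈ J, x t ∈ Ioo (-r) r := fun t ht => (hkey t ht).2.1.1
    have hs : ∀ t ∈ J, s (x t, h) = (d t).1 := fun t ht => by
      rw [← (hkey t ht).2.2]
    have hxm : StrictMonoOn (fun t => p0 * x t) J := by
      intro t ht t' ht' hlt
      have h1 := hd1 ht ht' hlt
      simp only [← hs t ht, ← hs t' ht'] at h1
      exact sgn_lt hP0 h1
        (fun hh1 => ((hsm h hh).lt_iff_lt (hxI t ht) (hxI t' ht')).1 hh1)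
        (fun hh1 => ((hsm h hh).lt_iff_lt (hxI t' ht') (hxI t ht)).1 hh1)
    have hpne : ∀ a b, p a b ≠ 0 := fun a b hab => by
      have := hpp a b
      simp [hab] at this
    have hkc : Continuous (fun ξ => (p ξ (φ ξ h))⁻¹) := by
      refine Continuous.inv₀ ?_ (fun ξ => hpne _ _)
      exact hpc.comp (continuous_id.prodMk (hφc.comp (continuous_id.prodMk continuous_const)))
    let σ : ℝ → ℝ := fun ξ => ∫ η in (0:ℝ)..ξ, (p η (φ η h))⁻¹
    have hσ : ∀ ξ, HasStrictDerivAt σ (p ξ (φ ξ h))⁻¹ ξ := fun ξ =>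
      hkc.integral_hasStrictDerivAt 0 ξ
    have hσm : StrictMono (fun ξ => p0 * σ ξ) := by
      refine strictMono_of_hasDerivAt_pos (f' := fun ξ => p0 * (p ξ (φ ξ h))⁻¹)
        (fun ξ => (hσ ξ).hasDerivAt.const_mul p0) (fun ξ => ?_)
      have h1 := hpp ξ (φ ξ h)
      have h2 : 0 < (p ξ (φ ξ h)) ^ 2 := by have := hpne ξ (φ ξ h); positivity
      have h3 : p0 * (p ξ (φ ξ h))⁻¹ = p0 * p ξ (φ ξ h) / (p ξ (φ ξ h)) ^ 2 := by
        have := hpne ξ (φ ξ h)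
        field_simp
      show 0 < p0 * (p ξ (φ ξ h))⁻¹
      rw [h3]
      positivity
    have hσi : Function.Injective σ := fun a b hab => hσm.injective (by simp [hab])
    let g := Function.invFun σ
    have hg : ∀ ξ, g (σ ξ) = ξ := Function.leftInverse_invFun hσi
    have hgd : ∀ ξ, HasDerivAt g (p ξ (φ ξ h)) (σ ξ) := fun ξ => by
      have := (hσ ξ).to_local_left_inverse (inv_ne_zero (hpne _ _)) (g := g)
        (Eventually.of_forall hg)
      rw [inv_inv] at this
      exact this.hasDerivAt
    have hσc : Continuous σ := continuous_iff_continuousAt.2 fun ξ => (hσ ξ).hasDerivAt.continuousAt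
    have hτc : ContinuousOn (fun t => σ (x t)) J := hσc.comp_continuousOn hxc
    have hτm : StrictMonoOn (fun t => σ (x t)) J := by
      intro t ht t' ht' hlt
      have h1 := hxm ht ht' hlt
      rcases lt_or_gt_of_ne hP0 with h0 | h0
      · have h2 : x t' < x t := lt_of_mul_lt_mul_of_nonpos_left h1 h0.le
        exact lt_of_mul_lt_mul_of_nonpos_left (hσm h2) h0.le
      · have h2 : x t < x t' := lt_of_mul_lt_mul_of_nonneg_left h1 h0.le
        exact lt_of_mul_lt_mul_of_nonneg_left (hσm h2) h0.le
    obtain ⟨hJ1, hJ2⟩ := image_interval hJ hJn hτc hτm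
    refine ⟨_, fun a => Ψ (g a, h), fun t => σ (x t), ⟨hJ1, hJ2, ?_, ?_⟩, hτc, hτm, rfl, ?_⟩
    · rintro _ ⟨t, ht, rfl⟩
      simp only [hg]
      refine ⟨⟨_, (hkey t ht).2.1, rfl⟩, fun hcon => (hdV t ht).2 ?_⟩
      rw [← (hkey t ht).2.2]
      exact (hδ _ (hkey t ht).2.1).1 hcon
    · rintro _ ⟨t, ht, rfl⟩
      have hb := hφd h hh' _ (hxI t ht)
      have hpq := hPQ (x t) (Ioo_subset_Icc_self (hxI t ht)) (φ (x t) h) (abs_le.1 hb.2)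
      have h1 := hgd (x t)
      have h2 : HasDerivAt (fun a => φ (g a) h) (F (x t) (φ (x t) h) * p (x t) (φ (x t) h))
          (σ (x t)) := by
        refine HasDerivAt.comp (h₂ := fun y => φ y h) (σ (x t)) ?_ h1
        rw [hg]
        exact hb.1
      have h3 := (h1.prodMk h2).hasDerivWithinAt (s := (fun t => σ (x t)) '' J)
      simp only [Ψ, hg, hpq.1, hpq.2]
      exact h3
    · intro t ht
      simp only [hg, (hkey t ht).1]
end

section
/- Let ε ∈ {1, −1} and δ(x, y) = x³ + ε·y⁴ (an E₆-type singular impasse curve). Let X = (P, Q) be real-analytic on a neighborhood of the origin in ℝ² with (P(0,0), Q(0,0)) ≠ (0, 0). Then, without any further assumption on the Taylor expansion of X, the constrained system (X, δ) is orientation-preserving C⁰-orbitally equivalent at (0, 0) to the constrained system (Y, δ), where Y is the constant vector field Y ≡ (P(0,0), Q(0,0)). -/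
namespace E6Aux

open Set Filter Topology Metric

theorem flow_strict (X : ℝ × ℝ → ℝ × ℝ) (hX : ContDiffAt ℝ 1 X 0) :
    ∃ φ : ℝ × ℝ → ℝ → ℝ × ℝ,
      HasStrictFDerivAt (fun q : (ℝ × ℝ) × ℝ => φ q.1 q.2)
        (ContinuousLinearMap.fst ℝ (ℝ × ℝ) ℝ +
          (ContinuousLinearMap.snd ℝ (ℝ × ℝ) ℝ).smulRight (X 0)) 0 ∧
      ∀ᶠ q : (ℝ × ℝ) × ℝ in 𝓝 0, φ q.1 0 = q.1 ∧
        HasDerivAt (φ q.1) (X (φ q.1 q.2)) q.2 := by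
  obtain ⟨ε, hε, a, r, L, K, hr, hpl⟩ := IsPicardLindelof.of_contDiffAt_one hX
  obtain ⟨φ, hφ, L', hL'⟩ :=
    (hpl 0).exists_forall_mem_closedBall_eq_hasDerivWithinAt_lipschitzOnWith
  simp only [zero_sub, zero_add] at hφ hL'
  have hder : ∀ x ∈ closedBall (0 : ℝ × ℝ) r, ∀ t ∈ Ioo (-ε) ε,
      HasDerivAt (φ x) (X (φ x t)) t := fun x hx t ht =>
    ((hφ x hx).2 t (Ioo_subset_Icc_self ht)).hasDerivAt (Icc_mem_nhds ht.1 ht.2)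
  have h0 : φ 0 0 = 0 := (hφ 0 (by simp)).1
  have hcont : ContinuousAt (fun q : (ℝ × ℝ) × ℝ => φ q.1 q.2) 0 := by
    have : ContinuousOn (fun q : (ℝ × ℝ) × ℝ => φ q.1 q.2)
        (closedBall 0 r ×ˢ Icc (-ε) ε) :=
      continuousOn_prod_of_continuousOn_lipschitzOnWith _ L'
        (fun x hx => HasDerivWithinAt.continuousOn (hφ x hx).2) hL'
    apply this.continuousAt
    exact prod_mem_nhds (closedBall_mem_nhds _ (by exact_mod_cast hr))
      (Icc_mem_nhds (by simpa using hε) (by simpa using hε))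
  obtain ⟨K, s, hs, hl⟩ := hX.exists_lipschitzOnWith
  have hXc : ContinuousAt X 0 := hX.continuousAt
  refine ⟨φ, ?_, ?_⟩
  · refine HasStrictFDerivAt.of_isLittleO ?_
    rw [Asymptotics.isLittleO_iff]
    intro e he
    have hcont' : Tendsto (fun q : (ℝ × ℝ) × ℝ => φ q.1 q.2) (𝓝 0) (𝓝 0) := by
      have := hcont.tendsto
      simpa [h0] using this
    have e1 : ∀ᶠ q : (ℝ × ℝ) × ℝ in 𝓝 0, φ q.1 q.2 ∈ s ∧ ‖X (φ q.1 q.2) - X 0‖ ≤ e / 2 := by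
      refine (hcont'.eventually hs).and ?_
      have := (hXc.tendsto.comp hcont')
      have := this.eventually (closedBall_mem_nhds (X 0) (half_pos he))
      filter_upwards [this] with q hq
      simpa [dist_eq_norm] using hq
    obtain ⟨ρ, hρ, hb⟩ := Metric.eventually_nhds_iff.1 e1
    obtain ⟨ρ', hρ', h1, h2, h3, h4⟩ : ∃ ρ' > 0, ρ' ≤ ρ ∧ ρ' ≤ r ∧ ρ' ≤ ε ∧
        ρ' * (K * L') ≤ e / 2 := by
      refine ⟨min (min ρ r) (min ε (e / 2 / (K * L' + 1))), ?_, ?_, ?_, ?_, ?_⟩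
      · have : (0:ℝ) < r := by exact_mod_cast hr
        positivity
      · exact (min_le_left _ _).trans (min_le_left _ _)
      · exact (min_le_left _ _).trans (min_le_right _ _)
      · exact (min_le_right _ _).trans (min_le_left _ _)
      · have hp : (0:ℝ) < K * L' + 1 := by positivity
        calc _ ≤ (e / 2 / (K * L' + 1)) * (K * L') := by
              gcongr
              exact (min_le_right _ _).trans (min_le_right _ _)
          _ ≤ (e / 2 / (K * L' + 1)) * (K * L' + 1) := by gcongr; linarith
          _ = e / 2 := by field_simp
    have key : ∀ p : ℝ × ℝ, ‖p‖ < ρ' → ∀ t : ℝ, |t| < ρ' →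
        φ p 0 = p ∧ HasDerivAt (φ p) (X (φ p t)) t ∧ φ p t ∈ s ∧ ‖X (φ p t) - X 0‖ ≤ e / 2 := by
      intro p hp t ht
      have hp' : p ∈ closedBall (0 : ℝ × ℝ) r := by simpa using (hp.le.trans h2)
      refine ⟨(hφ p hp').1, hder p hp' t ?_, @hb (p, t) ?_⟩
      · have := abs_lt.1 ht; constructor <;> linarith
      · rw [dist_zero_right, Prod.norm_def]
        simp only [Real.norm_eq_abs]
        exact max_lt (by linarith) (by linarith)
    have hball : ball (0 : ((ℝ × ℝ) × ℝ) × ((ℝ × ℝ) × ℝ)) ρ' ∈ 𝓝 0 := ball_mem_nhds _ hρ'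
    filter_upwards [hball] with ⟨⟨p, t⟩, ⟨q, u⟩⟩ hpq
    simp only [mem_ball, dist_zero_right, Prod.norm_def, Real.norm_eq_abs, max_lt_iff] at hpq
    obtain ⟨⟨hp, ht⟩, hq, hu⟩ := hpq
    have hp : ‖p‖ < ρ' := by rw [Prod.norm_def]; simpa using hp
    have hq : ‖q‖ < ρ' := by rw [Prod.norm_def]; simpa using hq
    simp only
    have A : ‖φ p t - φ p u - (t - u) • X 0‖ ≤ e / 2 * |t - u| := by
      have := (convex_Ioo (-ρ') ρ').norm_image_sub_le_of_norm_hasDerivWithin_le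
        (f := fun x => φ p x - x • X 0) (f' := fun x => X (φ p x) - X 0) (C := e / 2)
        (x := u) (y := t) ?_ ?_ (abs_lt.1 hu) (abs_lt.1 ht)
      · have e2 : φ p t - φ p u - (t - u) • X 0 = φ p t - t • X 0 - (φ p u - u • X 0) := by
          rw [sub_smul]; abel
        rw [e2]; exact this
      · intro x hx
        have k := key p hp x (abs_lt.2 hx)
        exact (k.2.1.sub (by simpa using (hasDerivAt_id x).smul_const (X 0))).hasDerivWithinAt
      · intro x hx
        exact (key p hp x (abs_lt.2 hx)).2.2.2
    have B : ‖φ p u - φ q u - (p - q)‖ ≤ e / 2 * ‖p - q‖ := by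
      have := (convex_Ioo (-ρ') ρ').norm_image_sub_le_of_norm_hasDerivWithin_le
        (f := fun x => φ p x - φ q x) (f' := fun x => X (φ p x) - X (φ q x))
        (C := K * (L' * ‖p - q‖))
        (x := 0) (y := u) ?_ ?_ (by constructor <;> linarith) (abs_lt.1 hu)
      · simp only [(key p hp u hu).1, (key q hq u hu).1] at this
        refine this.trans ?_
        rw [sub_zero, Real.norm_eq_abs]
        calc _ ≤ (K * (L' * ‖p - q‖)) * ρ' := by gcongr
          _ = (ρ' * (K * L')) * ‖p - q‖ := by ring
          _ ≤ _ := by gcongr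
      · intro x hx
        exact ((key p hp x (abs_lt.2 hx)).2.1.sub
          (key q hq x (abs_lt.2 hx)).2.1).hasDerivWithinAt
      · intro x hx
        have k1 := (key p hp x (abs_lt.2 hx)).2.2.1
        have k2 := (key q hq x (abs_lt.2 hx)).2.2.1
        refine (hl.norm_sub_le k1 k2).trans ?_
        gcongr
        refine (hL' x ?_).norm_sub_le ?_ ?_
        · constructor <;> linarith [hx.1, hx.2]
        · simpa using (hp.le.trans h2)
        · simpa using (hq.le.trans h2)
    have C1 : ‖p - q‖ ≤ ‖((p, t) : (ℝ × ℝ) × ℝ) - (q, u)‖ := norm_fst_le (((p, t) : (ℝ × ℝ) × ℝ) - (q, u))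
    have C2 : |t - u| ≤ ‖((p, t) : (ℝ × ℝ) × ℝ) - (q, u)‖ := norm_snd_le (((p, t) : (ℝ × ℝ) × ℝ) - (q, u))
    calc _ = ‖(φ p t - φ p u - (t - u) • X 0) + (φ p u - φ q u - (p - q))‖ := by
          congr 1
          simp
          abel
      _ ≤ e / 2 * |t - u| + e / 2 * ‖p - q‖ := (norm_add_le _ _).trans (add_le_add A B)
      _ ≤ e / 2 * ‖((p, t) : (ℝ × ℝ) × ℝ) - (q, u)‖ +
          e / 2 * ‖((p, t) : (ℝ × ℝ) × ℝ) - (q, u)‖ := by gcongr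
      _ = _ := by ring
  · have : closedBall (0 : ℝ × ℝ) r ×ˢ Ioo (-ε) ε ∈ 𝓝 (0 : (ℝ × ℝ) × ℝ) :=
      prod_mem_nhds (closedBall_mem_nhds _ (by exact_mod_cast hr))
        (Ioo_mem_nhds (by simpa using hε) (by simpa using hε))
    filter_upwards [this] with q hq
    exact ⟨(hφ q.1 hq.1).1, hder q.1 hq.1 q.2 hq.2⟩

/-- Flow box for `X`. -/
structure IsFlowBox (X : ℝ × ℝ → ℝ × ℝ) (F : OpenPartialHomeomorph (ℝ × ℝ) (ℝ × ℝ)) : Prop where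
  zero_mem : (0 : ℝ × ℝ) ∈ F.source
  der : ∀ p ∈ F.source, HasDerivAt (fun t => F (t, p.2)) (X (F p)) p.1
  anti : ∃ K : ℝ, ∀ p ∈ F.source, ∀ q ∈ F.source, ‖p - q‖ ≤ K * ‖F p - F q‖

/-- The linear part of a flow box. -/
noncomputable def boxLin (a v : ℝ × ℝ) : ℝ × ℝ →L[ℝ] ℝ × ℝ :=
  (ContinuousLinearMap.fst ℝ ℝ ℝ).smulRight a + (ContinuousLinearMap.snd ℝ ℝ ℝ).smulRight v

theorem boxLin_apply (a v p : ℝ × ℝ) : boxLin a v p = p.1 • a + p.2 • v := by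
  simp [boxLin]

theorem boxLin_equiv (a v : ℝ × ℝ) (hD : a.1 * v.2 - a.2 * v.1 ≠ 0) :
    ∃ e : (ℝ × ℝ) ≃L[ℝ] ℝ × ℝ, (e : ℝ × ℝ →L[ℝ] ℝ × ℝ) = boxLin a v := by
  set D := a.1 * v.2 - a.2 * v.1 with hDdef
  refine ⟨ContinuousLinearEquiv.equivOfInverse (boxLin a v)
    (boxLin (v.2 / D, - a.2 / D) (- v.1 / D, a.1 / D)) ?_ ?_, ?_⟩
  · rintro ⟨x, y⟩
    ext
    · simp [boxLin_apply]; field_simp; rw [hDdef]; ring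
    · simp [boxLin_apply]; field_simp; rw [hDdef]; ring
  · rintro ⟨x, y⟩
    ext
    · simp [boxLin_apply]; field_simp; rw [hDdef]; ring
    · simp [boxLin_apply]; field_simp; rw [hDdef]; ring
  · ext <;> rfl

theorem strict_homeo (f : ℝ × ℝ → ℝ × ℝ) (a v : ℝ × ℝ) (hD : a.1 * v.2 - a.2 * v.1 ≠ 0)
    (hf : HasStrictFDerivAt f (boxLin a v) 0) (U : Set (ℝ × ℝ)) (hU : U ∈ 𝓝 0) :
    ∃ F : OpenPartialHomeomorph (ℝ × ℝ) (ℝ × ℝ), (F : ℝ × ℝ → ℝ × ℝ) = f ∧ 0 ∈ F.source ∧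
      F.source ⊆ U ∧
      ∃ K : ℝ, ∀ p ∈ F.source, ∀ q ∈ F.source, ‖p - q‖ ≤ K * ‖f p - f q‖ := by
  obtain ⟨e, he⟩ := boxLin_equiv a v hD
  rw [← he] at hf
  obtain ⟨s, h0s, hso, hs⟩ := hf.approximates_deriv_on_open_nhds
  obtain ⟨U', hU'U, hU'o, h0U'⟩ := _root_.mem_nhds_iff.1 hU
  have hs' := hs.mono_set (inter_subset_left (t := U'))
  have hc := e.subsingleton_or_nnnorm_symm_pos.imp id fun hf' =>
      NNReal.half_lt_self <| ne_of_gt <| inv_pos.2 hf'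
  refine ⟨hs'.toOpenPartialHomeomorph f (s ∩ U') hc (hso.inter hU'o), rfl, ⟨h0s, h0U'⟩,
    fun x hx => hU'U hx.2, ?_⟩
  obtain ⟨K, hK⟩ : ∃ K, AntilipschitzWith K ((s ∩ U').domRestrict f) :=
    ⟨_, hs'.antilipschitz hc⟩
  refine ⟨K, fun p hp q hq => ?_⟩
  have := hK.le_mul_dist ⟨p, hp⟩ ⟨q, hq⟩
  rw [← dist_eq_norm, ← dist_eq_norm]
  exact this

theorem flowbox (X : ℝ × ℝ → ℝ × ℝ) (hX : ContDiffAt ℝ 1 X 0) (h : ℝ → ℝ × ℝ) (v : ℝ × ℝ)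
    (hh : HasStrictDerivAt h v 0) (h0 : h 0 = 0)
    (hD : (X 0).1 * v.2 - (X 0).2 * v.1 ≠ 0) :
    ∃ F : OpenPartialHomeomorph (ℝ × ℝ) (ℝ × ℝ), IsFlowBox X F ∧ F 0 = 0 ∧
      HasStrictFDerivAt F (boxLin (X 0) v) 0 ∧
      ∀ p ∈ F.source, F (0, p.2) = h p.2 := by
  obtain ⟨φ, hφ, hev⟩ := flow_strict X hX
  have hg : HasStrictFDerivAt (fun p : ℝ × ℝ => (h p.2, p.1))
      (((ContinuousLinearMap.snd ℝ ℝ ℝ).smulRight v).prod (ContinuousLinearMap.fst ℝ ℝ ℝ)) 0 := by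
    refine HasStrictFDerivAt.prodMk ?_ hasStrictFDerivAt_fst
    have := hh.hasStrictFDerivAt.comp (0 : ℝ × ℝ) (hasStrictFDerivAt_snd (𝕜 := ℝ) (p := (0 : ℝ × ℝ)))
    refine this.congr_fderiv ?_
    ext <;> simp
  have hg0 : (fun p : ℝ × ℝ => (h p.2, p.1)) 0 = 0 := by simp [h0]
  have hf : HasStrictFDerivAt (fun p : ℝ × ℝ => φ (h p.2) p.1) (boxLin (X 0) v) 0 := by
    rw [← hg0] at hφ
    have := hφ.comp (0 : ℝ × ℝ) hg
    refine this.congr_fderiv ?_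
    ext <;> simp [boxLin]
  have hgc : Tendsto (fun p : ℝ × ℝ => (h p.2, p.1)) (𝓝 0) (𝓝 0) := by
    have := hg.continuousAt.tendsto
    rwa [show (h (0 : ℝ × ℝ).2, (0 : ℝ × ℝ).1) = 0 from hg0] at this
  obtain ⟨F, hFf, hF0, hFU, hK⟩ := strict_homeo _ _ _ hD hf _ (hgc.eventually hev)
  have h1 : ∀ p ∈ F.source, F (0, p.2) = h p.2 := by
    intro p hp
    rw [hFf]
    exact (hFU hp).1
  refine ⟨F, ⟨hF0, ?_, ?_⟩, ?_, ?_, h1⟩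
  · intro p hp
    rw [hFf]
    exact (hFU hp).2
  · rw [hFf]; exact hK
  · have := h1 0 hF0
    exact this.trans h0
  · rw [hFf]; exact hf

theorem IsFlowBox.restr {X : ℝ × ℝ → ℝ × ℝ} {F : OpenPartialHomeomorph (ℝ × ℝ) (ℝ × ℝ)}
    (hF : IsFlowBox X F) {U : Set (ℝ × ℝ)} (hU : IsOpen U) (h0 : (0 : ℝ × ℝ) ∈ U) :
    IsFlowBox X (F.restrOpen U hU) := by
  obtain ⟨K, hK⟩ := hF.anti
  refine ⟨by simp [hF.zero_mem, h0], ?_, K, ?_⟩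
  · intro p hp
    rw [F.restrOpen_source] at hp
    exact hF.der p hp.1
  · intro p hp q hq
    rw [F.restrOpen_source] at hp hq
    exact hK p hp.1 q hq.1

theorem IsFlowBox.phase {X : ℝ × ℝ → ℝ × ℝ} {F : OpenPartialHomeomorph (ℝ × ℝ) (ℝ × ℝ)}
    (hF : IsFlowBox X F) {V : Set (ℝ × ℝ)} (hV : V ⊆ F.target) {J : Set ℝ} {c : ℝ → ℝ × ℝ}
    (hc : IsPhaseCurve X V J c) :
    ∃ t₀ s₀, ∀ t ∈ J, F.symm (c t) = (t + t₀, s₀) := by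
  obtain ⟨hJ, hJn, hcV, hcd⟩ := hc
  obtain ⟨K, hK⟩ := hF.anti
  have hd : ∀ t ∈ J, HasDerivWithinAt (fun u => F.symm (c u)) (1, 0) J t := by
    intro t ht
    set p := F.symm (c t) with hp
    have hps : p ∈ F.source := F.map_target (hV (hcV t ht))
    have hFp : F p = c t := F.right_inv (hV (hcV t ht))
    have d1 : HasDerivWithinAt (fun u => c u - F (p.1 + (u - t), p.2)) 0 J t := by
      have a1 := hcd t ht
      have a2 := hF.der p hps
      have a3 : HasDerivAt (fun u : ℝ => p.1 + (u - t)) 1 t := by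
        simpa using ((hasDerivAt_id t).sub_const t).const_add p.1
      have a2' : HasDerivAt (fun t => F (t, p.2)) (X (F p)) (p.1 + (t - t)) := by simpa using a2
      have a4 := a2'.scomp t a3
      have := a1.sub a4.hasDerivWithinAt
      simpa [hFp, Function.comp_def] using! this
    rw [hasDerivWithinAt_iff_isLittleO] at d1 ⊢
    refine Asymptotics.IsBigO.trans_isLittleO ?_ d1
    have hev : ∀ᶠ u in 𝓝[J] t, (p.1 + (u - t), p.2) ∈ F.source := by
      have hcn : ContinuousAt (fun u : ℝ => (p.1 + (u - t), p.2)) t := by fun_prop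
      have : F.source ∈ 𝓝 (p.1 + (t - t), p.2) := by
        simpa using F.open_source.mem_nhds hps
      exact nhdsWithin_le_nhds (hcn.eventually this)
    refine Asymptotics.IsBigO.of_bound K ?_
    filter_upwards [hev, self_mem_nhdsWithin] with u hu huJ
    have := hK _ (F.map_target (hV (hcV u huJ))) _ hu
    rw [F.right_inv (hV (hcV u huJ))] at this
    have e1 : F.symm (c u) - p - (u - t) • ((1, 0) : ℝ × ℝ) =
        F.symm (c u) - (p.1 + (u - t), p.2) := by
      ext <;> simp; ring
    have e2 : c u - F (p.1 + (u - t), p.2) - (c t - F (p.1 + (t - t), p.2)) -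
        (u - t) • (0 : ℝ × ℝ) = c u - F (p.1 + (u - t), p.2) := by
      simp [hFp]
    rw [e1, e2]
    exact this
  obtain ⟨t1, ht1⟩ := hJn.nonempty
  refine ⟨(F.symm (c t1)).1 - t1, (F.symm (c t1)).2, fun t ht => ?_⟩
  have := hJ.convex.norm_image_sub_le_of_norm_hasDerivWithin_le (𝕜 := ℝ)
    (f := fun u => F.symm (c u) - ((u, 0) : ℝ × ℝ)) (f' := fun _ => 0) (C := 0) (x := t1) (y := t)
    ?_ (by simp) ht1 ht
  · have h2 : F.symm (c t) - ((t, 0) : ℝ × ℝ) - (F.symm (c t1) - ((t1, 0) : ℝ × ℝ)) = 0 := by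
      simpa using this
    have e1 := congrArg Prod.fst h2
    have e2 := congrArg Prod.snd h2
    simp at e1 e2
    ext <;> simp <;> linarith
  · intro u hu
    have e : HasDerivWithinAt (fun u : ℝ => ((u, 0) : ℝ × ℝ)) (1, 0) J u :=
      ((hasDerivAt_id u).prodMk (hasDerivAt_const u (0:ℝ))).hasDerivWithinAt
    simpa using! (hd u hu).sub e


/-- The function `|y|^(1/3)`. -/
noncomputable def cr (y : ℝ) : ℝ := |y| ^ (1 / 3 : ℝ)

theorem cr_nonneg (y : ℝ) : 0 ≤ cr y := by unfold cr; positivity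

theorem cr_cube (y : ℝ) : cr y ^ 3 = |y| := by
  unfold cr
  rw [← Real.rpow_natCast, ← Real.rpow_mul (abs_nonneg _)]
  norm_num

theorem cr_cont : Continuous cr := by
  unfold cr
  exact continuous_abs.rpow_const (fun _ => Or.inr (by norm_num))

theorem cr_zero : cr 0 = 0 := by simp [cr]

theorem cr_lt {y y' : ℝ} (h : |y| < |y'|) : cr y < cr y' := by
  rw [← cr_cube y, ← cr_cube y'] at h
  exact lt_of_pow_lt_pow_left₀ 3 (cr_nonneg _) h

theorem cr_le {y y' : ℝ} (h : |y| ≤ |y'|) : cr y ≤ cr y' := by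
  rw [← cr_cube y, ← cr_cube y'] at h
  exact le_of_pow_le_pow_left₀ (by norm_num) (cr_nonneg _) h

theorem cr_four_lower {y y' : ℝ} (h : |y| ≤ |y'|) :
    cr y' * (|y'| - |y|) ≤ cr y' ^ 4 - cr y ^ 4 := by
  have h1 := cr_le h
  have h2 := cr_nonneg y
  rw [← cr_cube y, ← cr_cube y']
  have : 0 ≤ cr y ^ 3 * (cr y' - cr y) := mul_nonneg (by positivity) (by linarith)
  nlinarith

theorem cr_four_upper_aux {y y' : ℝ} (h : |y| ≤ |y'|) :
    cr y' ^ 4 - cr y ^ 4 ≤ 2 * cr y' * (|y'| - |y|) := by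
  have h1 := cr_le h
  have h2 := cr_nonneg y
  rw [← cr_cube y, ← cr_cube y']
  generalize cr y' = a at *
  generalize cr y = b at *
  have : 0 ≤ (a - b) * (a ^ 3 + a ^ 2 * b + a * b ^ 2 - b ^ 3) := by
    apply mul_nonneg (by linarith)
    have : b ^ 3 ≤ a ^ 3 := by gcongr
    have : 0 ≤ a ^ 2 * b + a * b ^ 2 := by
      have : 0 ≤ a := by linarith
      positivity
    linarith
  nlinarith

theorem cr_four_upper (y y' : ℝ) :
    |cr y ^ 4 - cr y' ^ 4| ≤ 2 * max (cr y) (cr y') * |y - y'| := by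
  rcases le_total (|y|) (|y'|) with h | h
  · have h1 := cr_four_upper_aux h
    have h3 : cr y ^ 4 ≤ cr y' ^ 4 := by gcongr; exacts [cr_nonneg _, cr_le h]
    rw [max_eq_right (cr_le h), abs_sub_comm, abs_of_nonneg (by linarith)]
    refine h1.trans ?_
    have := cr_nonneg y'
    gcongr
    rw [abs_sub_comm]
    exact abs_sub_abs_le_abs_sub _ _
  · have h1 := cr_four_upper_aux h
    have h3 : cr y' ^ 4 ≤ cr y ^ 4 := by gcongr; exacts [cr_nonneg _, cr_le h]
    rw [max_eq_left (cr_le h), abs_of_nonneg (by linarith)]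
    refine h1.trans ?_
    have := cr_nonneg y
    gcongr
    exact abs_sub_abs_le_abs_sub _ _

theorem cr_four_strict : HasStrictDerivAt (fun y => cr y ^ 4) 0 0 := by
  rw [hasStrictDerivAt_iff_hasStrictFDerivAt]
  refine HasStrictFDerivAt.of_isLittleO ?_
  rw [Asymptotics.isLittleO_iff]
  intro e he
  have hc : Continuous (fun p : ℝ × ℝ => 2 * max (cr p.1) (cr p.2)) := by
    have := cr_cont
    fun_prop
  have : ∀ᶠ p : ℝ × ℝ in 𝓝 (0, 0), 2 * max (cr p.1) (cr p.2) < e := by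
    apply hc.continuousAt.eventually_lt continuousAt_const
    simpa [cr_zero] using he
  filter_upwards [this] with p hp
  have h1 := cr_four_upper p.1 p.2
  simp
  refine h1.trans ?_
  gcongr

theorem curve_iff {ε : ℝ} (hε : ε = 1 ∨ ε = -1) (x y : ℝ) :
    x ^ 3 + ε * y ^ 4 = 0 ↔ x = -ε * cr y ^ 4 := by
  have h3 : (-ε * cr y ^ 4) ^ 3 = -ε * y ^ 4 := by
    have : (-ε * cr y ^ 4) ^ 3 = -ε ^ 3 * (cr y ^ 3) ^ 4 := by ring
    rw [this, cr_cube, Even.pow_abs (by decide)]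
    rcases hε with rfl | rfl <;> ring
  have hinj : Function.Injective (fun x : ℝ => x ^ 3) :=
    (Odd.strictMono_pow (by decide)).injective
  constructor
  · intro h
    apply hinj
    simp only
    rw [h3]; linarith
  · rintro rfl
    rw [h3]; ring

theorem homeo_of_strictMono (f : ℝ → ℝ) (hf : StrictMono f) (hc : Continuous f)
    (ht : Tendsto f atTop atTop) (hb : Tendsto f atBot atBot) :
    ∃ H : ℝ ≃ₜ ℝ, ∀ x, H x = f x :=
  ⟨(hf.orderIsoOfSurjective f (hc.surjective ht hb)).toHomeomorph, fun _ => rfl⟩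

/-- An extension lemma. -/
theorem homeo_ext (k : ℝ → ℝ) (r : ℝ) (hr : 0 < r) (hk : ContinuousOn k (Icc (-r) r))
    (hm : StrictMonoOn k (Icc (-r) r)) :
    ∃ H : ℝ ≃ₜ ℝ, StrictMono H ∧ ∀ x ∈ Icc (-r) r, H x = k x := by
  set pr : ℝ → ℝ := fun x => max (-r) (min r x) with hpr
  have hprc : Continuous pr := by fun_prop
  have hprm : ∀ x, pr x ∈ Icc (-r) r := fun x =>
    ⟨le_max_left _ _, max_le (by linarith) (min_le_left _ _)⟩
  have hprid : ∀ x ∈ Icc (-r) r, pr x = x := fun x hx => by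
    simp only [hpr]
    rw [min_eq_right hx.2, max_eq_right hx.1]
  have hcont : Continuous (fun x => k (pr x) + (x - pr x)) :=
    (hk.comp_continuous hprc hprm).add (continuous_id.sub hprc)
  have hprmono : Monotone pr := fun x y h => by simp only [hpr]; gcongr
  have hsm : StrictMono (fun x => k (pr x) + (x - pr x)) := by
    intro x y h
    have h1 := hprmono h.le
    have h2 : x - pr x ≤ y - pr y := by
      simp only [hpr]
      rcases max_cases (-r) (min r x) with h3 | h3 <;> rcases min_cases r x with h4 | h4 <;>
      rcases max_cases (-r) (min r y) with h5 | h5 <;> rcases min_cases r y with h6 | h6 <;>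
      linarith
    rcases h1.eq_or_lt with h3 | h3
    · simp only [h3]; linarith
    · have := hm (hprm x) (hprm y) h3
      simp only; linarith
  have hlow : ∀ x, x + (k (-r) - r) ≤ k (pr x) + (x - pr x) := fun x => by
    have := hm.monotoneOn (by constructor <;> linarith) (hprm x) (hprm x).1
    linarith [(hprm x).2]
  have hupp : ∀ x, k (pr x) + (x - pr x) ≤ x + (k r + r) := fun x => by
    have := hm.monotoneOn (hprm x) (by constructor <;> linarith) (hprm x).2
    linarith [(hprm x).1]
  obtain ⟨H, hH⟩ := homeo_of_strictMono _ hsm hcont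
    (tendsto_atTop_mono hlow (tendsto_atTop_add_const_right _ _ tendsto_id))
    (tendsto_atBot_mono hupp (tendsto_atBot_add_const_right _ _ tendsto_id))
  refine ⟨H, ?_, ?_⟩
  · rw [funext hH]; exact hsm
  · intro x hx
    rw [hH, hprid x hx]; ring

/-- The signed power homeomorphism. -/
theorem signed_homeo : ∃ W : ℝ ≃ₜ ℝ, StrictMono W ∧ ∀ y, |W y| = cr y ^ 4 := by
  have hsm : StrictMono (fun y => y * cr y) := by
    have hpos : StrictMonoOn (fun y => y * cr y) (Ici 0) := by
      intro x hx y hy h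
      have hx : 0 ≤ x := hx
      have hl : cr x < cr y := cr_lt (by rwa [abs_of_nonneg hx, abs_of_nonneg hy])
      have := cr_nonneg x
      simp only
      nlinarith
    have hneg : ∀ y, (-y) * cr (-y) = - (y * cr y) := fun y => by simp [cr]
    exact strictMono_of_odd_strictMonoOn_nonneg hneg hpos
  have hc : Continuous (fun y => y * cr y) := continuous_id.mul cr_cont
  have h1 : ∀ y, 1 ≤ |y| → 1 ≤ cr y := fun y hy => by
    have : cr 1 = 1 := by simp [cr]
    rw [← this]; exact cr_le (by simpa using hy)
  have ht : Tendsto (fun y => y * cr y) atTop atTop := by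
    refine tendsto_atTop_mono' _ ?_ tendsto_id
    filter_upwards [eventually_ge_atTop 1] with y hy
    have := h1 y (by rwa [abs_of_nonneg (by linarith)])
    simp only [id]; nlinarith
  have hb : Tendsto (fun y => y * cr y) atBot atBot := by
    refine tendsto_atBot_mono' _ ?_ tendsto_id
    filter_upwards [eventually_le_atBot (-1)] with y hy
    have := h1 y (by rw [abs_of_nonpos (by linarith)]; linarith)
    simp only [id]; nlinarith
  obtain ⟨W, hW⟩ := homeo_of_strictMono _ hsm hc ht hb
  refine ⟨W, by rw [funext hW]; exact hsm, fun y => ?_⟩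
  rw [hW, abs_mul, abs_of_nonneg (cr_nonneg y), ← cr_cube]; ring


theorem image_interval {J : Set ℝ} (hJ : J.OrdConnected) (hn : J.Nontrivial) {τ : ℝ → ℝ}
    (hc : ContinuousOn τ J) (hm : StrictMonoOn τ J) :
    (τ '' J).OrdConnected ∧ (τ '' J).Nontrivial :=
  ⟨(hJ.isPreconnected.image τ hc).ordConnected, hn.image_of_injOn hm.injOn⟩

theorem combine {X Y : ℝ × ℝ → ℝ × ℝ} {δ : ℝ × ℝ → ℝ}
    {F N : OpenPartialHomeomorph (ℝ × ℝ) (ℝ × ℝ)} (hs : N.source = F.source)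
    (hF : IsFlowBox X F) (F0 : F 0 = 0) (N0 : N 0 = 0)
    (hδ : ∀ p ∈ F.source, δ (F p) = 0 ↔ δ (N p) = 0)
    (P1 : ∀ (J : Set ℝ) (d : ℝ → ℝ × ℝ), IsPhaseCurve Y N.target J d →
      ∃ (s₀ : ℝ) (T : ℝ → ℝ), ContinuousOn T J ∧ StrictMonoOn T J ∧
        ∀ t ∈ J, N.symm (d t) = (T t, s₀))
    (P2 : ∀ (J : Set ℝ) (t₀ s₀ : ℝ), (∀ t ∈ J, (t + t₀, s₀) ∈ F.source) →
      ∃ (d : ℝ → ℝ × ℝ) (τ : ℝ → ℝ), ContinuousOn τ J ∧ StrictMonoOn τ J ∧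
        (∀ t ∈ J, N (t + t₀, s₀) = d (τ t)) ∧ ∀ t ∈ J, HasDerivAt d (Y (d (τ t))) (τ t)) :
    OrbitallyEquivAt X δ (0, 0) Y δ (0, 0) := by
  have h0F : (0 : ℝ × ℝ) ∈ F.source := hF.zero_mem
  have h0N : (0 : ℝ × ℝ) ∈ N.source := hs ▸ h0F
  have m1 : MapsTo F.symm F.target N.source := fun z hz => hs ▸ F.map_target hz
  have m2 : MapsTo N.symm N.target F.source := fun z hz => hs ▸ N.map_target hz
  have mN : ∀ p ∈ F.source, N p ∈ N.target := fun p hp => N.map_source (hs.symm ▸ hp)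
  refine ⟨F.target, N.target, fun z => N (F.symm z), fun z => F (N.symm z), F.open_target,
    N.open_target, ?_, ?_, ?_, ?_, ?_, ?_, ?_, ?_, ?_, ?_, ?_, ?_⟩
  · have := F.map_source h0F; rwa [F0] at this
  · have := N.map_source h0N; rwa [N0] at this
  · exact N.continuousOn.comp F.continuousOn_symm m1
  · exact F.continuousOn.comp N.continuousOn_symm m2
  · exact fun z hz => N.map_source (m1 hz)
  · exact fun z hz => F.map_source (m2 hz)
  · intro z hz
    simp only
    rw [N.left_inv (m1 hz), F.right_inv hz]
  · intro z hz
    simp only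
    rw [F.left_inv (m2 hz), N.right_inv hz]
  · have : F.symm 0 = 0 := by
      have := F.left_inv h0F
      rwa [F0] at this
    change N (F.symm 0) = 0
    rw [this, N0]
  · ext w
    constructor
    · rintro ⟨z, ⟨hz, hzt⟩, rfl⟩
      refine ⟨?_, N.map_source (m1 hzt)⟩
      have := hδ (F.symm z) (F.map_target hzt)
      rw [F.right_inv hzt] at this
      exact this.1 hz
    · rintro ⟨hw, hwt⟩
      refine ⟨F (N.symm w), ⟨?_, F.map_source (m2 hwt)⟩, ?_⟩
      · have := hδ (N.symm w) (m2 hwt)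
        rw [N.right_inv hwt] at this
        exact this.2 hw
      · simp only
        rw [F.left_inv (m2 hwt), N.right_inv hwt]
  · intro J c hc
    obtain ⟨t₀, s₀, hts⟩ := hF.phase sdiff_subset hc
    have hsrc : ∀ t ∈ J, (t + t₀, s₀) ∈ F.source := fun t ht => by
      rw [← hts t ht]; exact F.map_target (hc.2.2.1 t ht).1
    obtain ⟨d, τ, hτc, hτm, hd, hdd⟩ := P2 J t₀ s₀ hsrc
    have hI := image_interval hc.1 hc.2.1 hτc hτm
    refine ⟨τ '' J, d, τ, ⟨hI.1, hI.2, ?_, ?_⟩, hτc, hτm, rfl, fun t ht => ?_⟩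
    · rintro _ ⟨t, ht, rfl⟩
      rw [← hd t ht]
      refine ⟨mN _ (hsrc t ht), fun h => (hc.2.2.1 t ht).2 ?_⟩
      have := (hδ _ (hsrc t ht)).2 h
      rw [← hts t ht, F.right_inv (hc.2.2.1 t ht).1] at this
      exact this
    · rintro _ ⟨t, ht, rfl⟩
      exact (hdd t ht).hasDerivWithinAt
    · simp only
      rw [hts t ht, hd t ht]
  · intro J d hd
    obtain ⟨s₀, T, hTc, hTm, hT⟩ := P1 J d ⟨hd.1, hd.2.1, fun t ht => (hd.2.2.1 t ht).1, hd.2.2.2⟩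
    have hI := image_interval hd.1 hd.2.1 hTc hTm
    have hsrc : ∀ t ∈ J, (T t, s₀) ∈ F.source := fun t ht => by
      rw [← hT t ht]; exact m2 (hd.2.2.1 t ht).1
    refine ⟨T '' J, fun u => F (u, s₀), T, ⟨hI.1, hI.2, ?_, ?_⟩, hTc, hTm, rfl, fun t ht => ?_⟩
    · rintro _ ⟨t, ht, rfl⟩
      refine ⟨F.map_source (hsrc t ht), fun h => (hd.2.2.1 t ht).2 ?_⟩
      have := (hδ _ (hsrc t ht)).1 h
      rw [← hT t ht, N.right_inv (hd.2.2.1 t ht).1] at this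
      exact this
    · rintro _ ⟨t, ht, rfl⟩
      exact (hF.der _ (hsrc t ht)).hasDerivWithinAt
    · simp only
      rw [hT t ht]

/-- Transversal case. -/
theorem case_transversal (ε : ℝ) (hε : ε = 1 ∨ ε = -1) (X : ℝ × ℝ → ℝ × ℝ)
    (hX : ContDiffAt ℝ 1 X 0) (ha : (X 0).1 ≠ 0) :
    OrbitallyEquivAt X (fun z => z.1 ^ 3 + ε * z.2 ^ 4) (0, 0)
      (fun _ => X 0) (fun z => z.1 ^ 3 + ε * z.2 ^ 4) (0, 0) := by
  set h : ℝ → ℝ × ℝ := fun s => (-ε * cr s ^ 4, s) with hh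
  have hg : HasStrictDerivAt (fun s => -ε * cr s ^ 4) 0 0 := by
    simpa using cr_four_strict.const_mul (-ε)
  have hhd : HasStrictDerivAt h (0, 1) 0 := hg.prodMk (hasStrictDerivAt_id 0)
  have h0 : h 0 = 0 := by simp [hh, cr_zero]
  -- the key local claim
  have key : ∀ Z : ℝ × ℝ → ℝ × ℝ, ContDiffAt ℝ 1 Z 0 → (Z 0).1 ≠ 0 →
      ∃ F : OpenPartialHomeomorph (ℝ × ℝ) (ℝ × ℝ), IsFlowBox Z F ∧ F 0 = 0 ∧
        ∃ U : Set (ℝ × ℝ), IsOpen U ∧ 0 ∈ U ∧ ∀ p ∈ F.source ∩ U,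
          ((F p).1 ^ 3 + ε * (F p).2 ^ 4 = 0 ↔ p.1 = 0) := by
    intro Z hZ hZ0
    obtain ⟨F, hF, F0, hFd, hFh⟩ := flowbox Z hZ h (0, 1) hhd h0 (by simpa using hZ0)
    refine ⟨F, hF, F0, ?_⟩
    set m : ℝ × ℝ → ℝ := fun p => (F p).1 - (-ε * cr (F p).2 ^ 4) with hm
    have hmd : HasStrictFDerivAt m ((Z 0).1 • ContinuousLinearMap.fst ℝ ℝ ℝ) 0 := by
      have hF2 : HasStrictFDerivAt (fun p => (F p).2) _ 0 := hFd.snd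
      have g' : HasStrictDerivAt (fun s => -ε * cr s ^ 4) 0 ((F 0).2) := by simpa [F0] using hg
      have := hFd.fst.sub (g'.hasStrictFDerivAt.comp (0 : ℝ × ℝ) hF2)
      refine this.congr_fderiv ?_
      ext <;> simp [boxLin]
    have hc : 0 < |(Z 0).1| / 2 := by positivity
    obtain ⟨s, hs, hap⟩ := hmd.approximates_deriv_on_nhds
      (c := ⟨|(Z 0).1| / 2, hc.le⟩) (Or.inr hc)
    obtain ⟨ρ, hρ, hb⟩ := Metric.mem_nhds_iff.1 hs
    refine ⟨ball 0 ρ, isOpen_ball, mem_ball_self hρ, ?_⟩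
    rintro ⟨t, u⟩ ⟨hp, hpρ⟩
    have hpρ' : ((0 : ℝ), u) ∈ ball (0 : ℝ × ℝ) ρ := by
      simp only [mem_ball, dist_zero_right, Prod.norm_def, max_lt_iff] at hpρ ⊢
      simpa using ⟨hρ, hpρ.2⟩
    have h1 := hap _ (hb hpρ) _ (hb hpρ')
    have hm0 : m (0, u) = 0 := by
      have := hFh _ hp
      simp only [hm]
      rw [this]; simp [hh]
    have e1 : (((t, u) : ℝ × ℝ) - (0, u)) = (t, 0) := by simp
    rw [hm0, e1] at h1
    have e2 : ‖((t, 0) : ℝ × ℝ)‖ = |t| := by simp [Prod.norm_def]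
    rw [e2] at h1
    rw [curve_iff hε, ← sub_eq_zero]
    change m (t, u) = 0 ↔ t = 0
    constructor
    · intro h2
      rw [h2] at h1
      simp at h1
      have h1 : |(Z 0).1| * |t| ≤ |(Z 0).1| / 2 * |t| := h1
      by_contra h3
      have : 0 < |t| := abs_pos.2 h3
      nlinarith [abs_pos.2 hZ0]
    · intro h2
      rw [h2, hm0]
  obtain ⟨F, hF, F0, U, hU, hU0, hUδ⟩ := key X hX ha
  obtain ⟨N, hN, N0, U', hU', hU'0, hU'δ⟩ := key (fun _ => X 0) contDiffAt_const ha
  have o1 : IsOpen (N.source ∩ (U ∩ U')) := N.open_source.inter (hU.inter hU')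
  have o2 : IsOpen (F.source ∩ (U ∩ U')) := F.open_source.inter (hU.inter hU')
  have hF' := hF.restr o1 ⟨hN.zero_mem, hU0, hU'0⟩
  have hN' := hN.restr o2 ⟨hF.zero_mem, hU0, hU'0⟩
  have hsrc : (N.restrOpen _ o2).source = (F.restrOpen _ o1).source := by
    rw [OpenPartialHomeomorph.restrOpen_source, OpenPartialHomeomorph.restrOpen_source]
    ext; simp; tauto
  refine combine hsrc hF' F0 N0 ?_ ?_ ?_
  · intro p hp
    rw [OpenPartialHomeomorph.restrOpen_source] at hp
    exact (hUδ p ⟨hp.1, hp.2.2.1⟩).trans (hU'δ p ⟨hp.2.1, hp.2.2.2⟩).symm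
  · intro J d hd
    obtain ⟨t₀, s₀, hts⟩ := hN'.phase Subset.rfl hd
    exact ⟨s₀, fun t => t + t₀, by fun_prop, fun a _ b _ hab => by simpa using hab, hts⟩
  · intro J t₀ s₀ hJ
    refine ⟨fun u => N (u, s₀), fun t => t + t₀, by fun_prop,
      fun a _ b _ hab => by simpa using hab, fun t ht => rfl, fun t ht => ?_⟩
    have := hJ t ht
    rw [← hsrc] at this
    exact hN'.der _ this


section tangent

variable {X : ℝ × ℝ → ℝ × ℝ} {F : OpenPartialHomeomorph (ℝ × ℝ) (ℝ × ℝ)} {b c K ρ : ℝ}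

/-- Approximate linearity with small constant. -/
def Approx (F : OpenPartialHomeomorph (ℝ × ℝ) (ℝ × ℝ)) (b c ρ : ℝ) : Prop :=
  ∀ p ∈ ball (0 : ℝ × ℝ) ρ, ∀ q ∈ ball (0 : ℝ × ℝ) ρ,
    ‖F p - F q - boxLin (0, b) (1, 0) (p - q)‖ ≤ c * ‖p - q‖

theorem Approx.comp (h : Approx F b c ρ) {p q : ℝ × ℝ}
    (hp : p ∈ ball (0 : ℝ × ℝ) ρ) (hq : q ∈ ball (0 : ℝ × ℝ) ρ) :
    |(F p).1 - (F q).1 - (p.2 - q.2)| ≤ c * max |p.1 - q.1| |p.2 - q.2| ∧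
    |(F p).2 - (F q).2 - b * (p.1 - q.1)| ≤ c * max |p.1 - q.1| |p.2 - q.2| := by
  have h1 := h p hp q hq
  have e1 : ‖p - q‖ = max |p.1 - q.1| |p.2 - q.2| := by
    rw [Prod.norm_def]; rfl
  rw [e1, Prod.norm_def, boxLin_apply] at h1
  simp only [Real.norm_eq_abs] at h1
  have h2 := (le_max_left _ _).trans h1
  have h3 := (le_max_right _ _).trans h1
  simp only [Prod.fst_sub, Prod.snd_sub, Prod.fst_add, Prod.snd_add, Prod.smul_fst, Prod.smul_snd,
    smul_eq_mul, mul_zero, mul_one, zero_add, add_zero] at h2 h3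
  refine ⟨h2, ?_⟩
  rwa [mul_comm b]

theorem Approx.same_s (h : Approx F b c ρ) (hcb : c ≤ |b| / 2) (hc : c ≤ 1 / 2) {t t' s : ℝ}
    (hp : (t, s) ∈ ball (0 : ℝ × ℝ) ρ) (hq : (t', s) ∈ ball (0 : ℝ × ℝ) ρ) :
    |(F (t, s)).1 - (F (t', s)).1| ≤ |t - t'| / 2 ∧
    |(F (t, s)).2 - (F (t', s)).2 - b * (t - t')| ≤ |b| / 2 * |t - t'| := by
  obtain ⟨h1, h2⟩ := h.comp hp hq
  simp only [sub_self, abs_zero, sub_zero] at h1 h2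
  rw [max_eq_left (abs_nonneg _)] at h1 h2
  have := abs_nonneg (t - t')
  constructor
  · nlinarith
  · nlinarith

theorem Approx.sign (h : Approx F b c ρ) (hb : b ≠ 0) (hcb : c ≤ |b| / 2) (hc : c ≤ 1 / 2)
    {t t' s : ℝ}
    (hp : (t, s) ∈ ball (0 : ℝ × ℝ) ρ) (hq : (t', s) ∈ ball (0 : ℝ × ℝ) ρ) :
    t' < t ↔ 0 < b * ((F (t, s)).2 - (F (t', s)).2) := by
  have h2 := (h.same_s hcb hc hp hq).2
  have hbp : 0 < b ^ 2 := by positivity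
  have h3 : |b * ((F (t, s)).2 - (F (t', s)).2) - b ^ 2 * (t - t')| ≤ b ^ 2 / 2 * |t - t'| := by
    have e : b * ((F (t, s)).2 - (F (t', s)).2) - b ^ 2 * (t - t') =
      b * ((F (t, s)).2 - (F (t', s)).2 - b * (t - t')) := by ring
    rw [e, abs_mul]
    have : |b| * |(F (t, s)).2 - (F (t', s)).2 - b * (t - t')| ≤
        |b| * (|b| / 2 * |t - t'|) := by gcongr
    refine this.trans (le_of_eq ?_)
    rw [← sq_abs b]; ring
  obtain ⟨h4, h5⟩ := abs_le.1 h3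
  constructor
  · intro hl
    rw [abs_of_pos (by linarith)] at h4
    nlinarith
  · intro hl
    by_contra hn
    rw [abs_of_nonpos (by linarith)] at h5
    nlinarith

theorem Approx.same_y (h : Approx F b c ρ) (hb : b ≠ 0) (hcb : c ≤ |b| / 2) (hc : c ≤ 1 / 2)
    {p q : ℝ × ℝ} (hp : p ∈ ball (0 : ℝ × ℝ) ρ) (hq : q ∈ ball (0 : ℝ × ℝ) ρ)
    (hy : (F p).2 = (F q).2) :
    |(F p).1 - (F q).1 - (p.2 - q.2)| ≤ |p.2 - q.2| / 2 := by
  obtain ⟨h1, h2⟩ := h.comp hp hq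
  have hbp : 0 < |b| := abs_pos.2 hb
  rw [hy, sub_self, zero_sub, abs_neg, abs_mul] at h2
  rcases max_cases |p.1 - q.1| |p.2 - q.2| with h3 | h3
  · rw [h3.1] at h1 h2
    have h4 := abs_nonneg (p.1 - q.1)
    have h5 : |p.1 - q.1| = 0 := by
      by_contra hne
      have : 0 < |p.1 - q.1| := lt_of_le_of_ne h4 (Ne.symm hne)
      nlinarith
    rw [h5, mul_zero] at h1
    linarith [abs_nonneg (p.2 - q.2)]
  · rw [h3.1] at h1
    nlinarith [abs_nonneg (p.2 - q.2)]

/-- The key comparison. -/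
theorem order_key (h : Approx F b c ρ) (hb : b ≠ 0) (hcb : c ≤ |b| / 2) (hc : c ≤ 1 / 2)
    (hF : IsFlowBox X F) (hU : ball 0 ρ ⊆ F.source) (hK : 0 < K)
    (hP : ∀ p ∈ ball (0 : ℝ × ℝ) ρ, |(X (F p)).1| ≤ K * ‖F p‖)
    {σ : ℝ} (hσ : σ = 1 ∨ σ = -1) {y₁ y₂ : ℝ} (hs : |y₂ - y₁| = |y₂| - |y₁|) (hlt : |y₁| < |y₂|)
    (hy1 : |y₂| ≤ 1) (hy : K * (5 + 1 / |b|) * (2 / |b|) * cr y₂ ^ 2 < 1)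
    {p₁ p₂ p₃ : ℝ × ℝ} (hp1 : p₁ ∈ ball (0 : ℝ × ℝ) ρ) (hp2 : p₂ ∈ ball (0 : ℝ × ℝ) ρ)
    (hp3 : p₃ ∈ ball (0 : ℝ × ℝ) ρ)
    (hF1 : F p₁ = (σ * cr y₁ ^ 4, y₁)) (hF2 : F p₂ = (σ * cr y₂ ^ 4, y₂))
    (hs3 : p₃.2 = p₁.2) (hF3 : (F p₃).2 = y₂) :
    σ * p₁.2 < σ * p₂.2 := by
  obtain ⟨t₁, s⟩ := p₁
  obtain ⟨t₃, s₃⟩ := p₃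
  simp only at hs3
  subst hs3
  have hbp : 0 < |b| := abs_pos.2 hb
  set C := 5 + 1 / |b| with hC
  have hCp : 0 < C := by positivity
  have hcv := convex_ball (0 : ℝ × ℝ) ρ
  -- points on the segment
  have hseg : ∀ t ∈ uIcc t₁ t₃, (t, s₃) ∈ ball (0 : ℝ × ℝ) ρ := by
    intro t ht
    rw [mem_ball, dist_zero_right, Prod.norm_def] at hp1 hp3 ⊢
    simp only [Real.norm_eq_abs, max_lt_iff] at hp1 hp3 ⊢
    refine ⟨?_, hp1.2⟩
    rw [mem_uIcc] at ht
    have a1 := abs_lt.1 hp1.1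
    have a3 := abs_lt.1 hp3.1
    rw [abs_lt]
    rcases ht with ht | ht <;> constructor <;> linarith [ht.1, ht.2]
  have hT : |t₃ - t₁| ≤ 2 / |b| * (|y₂| - |y₁|) := by
    have h1 := (h.same_s hcb hc hp3 hp1).2
    rw [hF3, hF1] at h1
    simp only at h1
    have h2 : |b| * |t₃ - t₁| ≤ |y₂ - y₁| + |b| / 2 * |t₃ - t₁| := by
      rw [← abs_mul]
      have : b * (t₃ - t₁) = (y₂ - y₁) - (y₂ - y₁ - b * (t₃ - t₁)) := by ring
      rw [this]
      exact (abs_sub _ _).trans (by linarith)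
    rw [← hs, div_mul_eq_mul_div, le_div_iff₀ hbp]
    linarith
  have hT' : |t₃ - t₁| ≤ 2 / |b| * |y₂| :=
    hT.trans (by gcongr; linarith [abs_nonneg y₁])
  have hcr1 : cr y₁ ≤ 1 := by
    have : cr 1 = 1 := by simp [cr]
    rw [← this]
    exact cr_le (by rw [abs_one]; linarith)
  have hbd : ∀ t ∈ uIcc t₁ t₃, |(X (F (t, s₃))).1| ≤ K * (C * |y₂|) := by
    intro t ht
    refine (hP _ (hseg t ht)).trans ?_
    gcongr
    have htt : |t - t₁| ≤ 2 / |b| * |y₂| := (abs_sub_left_of_mem_uIcc ht).trans hT'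
    obtain ⟨h1, h2⟩ := h.same_s hcb hc (hseg t ht) hp1
    rw [hF1] at h1 h2
    simp only at h1 h2
    have hg1 : |σ * cr y₁ ^ 4| ≤ |y₁| := by
      have : |σ| = 1 := by rcases hσ with rfl | rfl <;> simp
      rw [abs_mul, this, one_mul, abs_of_nonneg (by have := cr_nonneg y₁; positivity), ← cr_cube]
      have := cr_nonneg y₁
      nlinarith [pow_nonneg this 3]
    rw [Prod.norm_def]
    simp only [Real.norm_eq_abs]
    have e1 : 2 / |b| * |y₂| = 2 * (1 / |b| * |y₂|) := by ring
    have e2 : C * |y₂| = 5 * |y₂| + 1 / |b| * |y₂| := by rw [hC]; ring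
    have e3 : 0 ≤ 1 / |b| * |y₂| := by positivity
    rw [e1] at htt
    apply max_le
    · have := abs_sub_abs_le_abs_sub (F (t, s₃)).1 (σ * cr y₁ ^ 4)
      rw [e2]
      linarith [abs_nonneg y₂]
    · have a1 := abs_sub_abs_le_abs_sub (F (t, s₃)).2 y₁
      have a2 : |(F (t, s₃)).2 - y₁| ≤ |b| / 2 * |t - t₁| + |b| * |t - t₁| := by
        have : (F (t, s₃)).2 - y₁ = ((F (t, s₃)).2 - y₁ - b * (t - t₁)) + b * (t - t₁) := by ring
        rw [this]
        refine (abs_add_le _ _).trans ?_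
        rw [abs_mul b]
        linarith
      have a3 : |b| * |t - t₁| ≤ 2 * |y₂| := by
        calc _ ≤ |b| * (2 * (1 / |b| * |y₂|)) := by gcongr
          _ = _ := by field_simp
      rw [e2]
      linarith [abs_nonneg y₂]
  have hx : |(F (t₃, s₃)).1 - σ * cr y₁ ^ 4| ≤ K * (C * |y₂|) * |t₃ - t₁| := by
    have := (convex_uIcc t₁ t₃).norm_image_sub_le_of_norm_hasDerivWithin_le (𝕜 := ℝ)
      (f := fun t => (F (t, s₃)).1) (f' := fun t => (X (F (t, s₃))).1) (C := K * (C * |y₂|))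
      (x := t₁) (y := t₃) ?_ hbd left_mem_uIcc right_mem_uIcc
    · simpa [hF1] using this
    · intro t ht
      have := hF.der _ (hU (hseg t ht))
      exact (hasDerivAt_iff_hasFDerivAt.1 this).fst.hasDerivAt.hasDerivWithinAt.congr_deriv (by simp)
  have hlow := cr_four_lower hlt.le
  have hcp : 0 < cr y₂ := lt_of_le_of_lt (cr_nonneg y₁) (cr_lt hlt)
  have hfin : K * (C * |y₂|) * |t₃ - t₁| < cr y₂ ^ 4 - cr y₁ ^ 4 := by
    refine lt_of_lt_of_le ?_ hlow
    calc _ ≤ K * (C * |y₂|) * (2 / |b| * (|y₂| - |y₁|)) := by gcongr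
      _ = (K * C * (2 / |b|) * cr y₂ ^ 2) * (cr y₂ * (|y₂| - |y₁|)) := by
        rw [← cr_cube y₂]; ring
      _ < 1 * (cr y₂ * (|y₂| - |y₁|)) := by
        have : 0 < cr y₂ * (|y₂| - |y₁|) := mul_pos hcp (by linarith)
        gcongr
      _ = _ := one_mul _
  have hsy := h.same_y hb hcb hc hp2 hp3 (by rw [hF2, hF3])
  rw [hF2] at hsy
  simp only at hsy
  have hx' := abs_le.1 (hx.trans hfin.le)
  have hx2 := abs_lt.1 (lt_of_le_of_lt hx hfin)
  obtain ⟨k1, k2⟩ := abs_le.1 hsy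
  rcases hσ with rfl | rfl
  · by_contra hn
    rw [abs_of_nonpos (by linarith)] at k2
    linarith
  · by_contra hn
    rw [abs_of_nonneg (by linarith)] at k1
    linarith

end tangent


theorem tangent_eta {X : ℝ × ℝ → ℝ × ℝ} {F M : OpenPartialHomeomorph (ℝ × ℝ) (ℝ × ℝ)}
    {b c K ρ : ℝ} (h : Approx F b c ρ) (hb : b ≠ 0) (hcb : c ≤ |b| / 2) (hc : c ≤ 1 / 2)
    (hF : IsFlowBox X F) (F0 : F 0 = 0) (hU : ball 0 ρ ⊆ F.source) (hK : 0 < K)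
    (hP : ∀ p ∈ ball (0 : ℝ × ℝ) ρ, |(X (F p)).1| ≤ K * ‖F p‖)
    {σ : ℝ} (hσ : σ = 1 ∨ σ = -1)
    (hM : ∀ p, M p = (p.2, (F p).2)) (hMs : M.source ⊆ ball 0 ρ) (h0 : 0 ∈ M.source) :
    ∃ (r : ℝ) (η : ℝ ≃ₜ ℝ), 0 < r ∧ StrictMono η ∧ η 0 = 0 ∧ ∀ y, |y| < r →
      (σ * cr y ^ 4, y) ∈ F.target ∧ F.symm (σ * cr y ^ 4, y) ∈ M.source ∧
      σ * cr (η y) ^ 4 = (F.symm (σ * cr y ^ 4, y)).2 := by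
  set γ : ℝ → ℝ × ℝ := fun y => (σ * cr y ^ 4, y) with hγ
  have hγc : Continuous γ := by
    have := cr_cont
    fun_prop
  have hγ0 : γ 0 = 0 := by simp [hγ, cr_zero]
  have h0t : (0 : ℝ × ℝ) ∈ F.target := by
    have := F.map_source hF.zero_mem
    rwa [F0] at this
  have hs0 : F.symm 0 = 0 := by
    have := F.left_inv hF.zero_mem
    rwa [F0] at this
  have hM0 : M 0 = 0 := by rw [hM, F0]; rfl
  have hM0t : (0 : ℝ × ℝ) ∈ M.target := by
    have := M.map_source h0
    rwa [hM0] at this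
  set G : ℝ → ℝ := fun y => (F.symm (γ y)).2 with hG
  have hG0 : G 0 = 0 := by simp [hG, hγ0, hs0]
  -- the neighbourhood
  have E1 : ∀ᶠ y in 𝓝 (0 : ℝ), K * (5 + 1 / |b|) * (2 / |b|) * cr y ^ 2 < 1 := by
    have hcc : Continuous (fun y => K * (5 + 1 / |b|) * (2 / |b|) * cr y ^ 2) := by
      have := cr_cont
      fun_prop
    exact hcc.continuousAt.eventually_lt continuousAt_const (by simp [cr_zero])
  have E2 : ∀ᶠ y in 𝓝 (0 : ℝ), γ y ∈ F.target ∩ F.symm ⁻¹' M.source := by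
    have ho : IsOpen (F.target ∩ F.symm ⁻¹' M.source) :=
      F.isOpen_inter_preimage_symm M.open_source
    refine hγc.continuousAt.eventually_mem (ho.mem_nhds ?_)
    rw [hγ0]
    exact ⟨h0t, by simpa [hs0] using h0⟩
  have hGc0 : ContinuousAt G 0 := by
    have h1 : ContinuousAt F.symm (γ 0) := F.continuousAt_symm (by rw [hγ0]; exact h0t)
    exact (h1.comp hγc.continuousAt).snd
  have E3 : ∀ᶠ q : ℝ × ℝ in 𝓝 0, (G q.1, q.2) ∈ M.target := by
    have h1 : ContinuousAt (fun q : ℝ × ℝ => (G q.1, q.2)) 0 := by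
      have : ContinuousAt (fun q : ℝ × ℝ => G q.1) 0 :=
        ContinuousAt.comp (f := Prod.fst) (x := (0 : ℝ × ℝ)) hGc0 continuousAt_fst
      exact this.prodMk continuousAt_snd
    refine h1.eventually_mem (M.open_target.mem_nhds ?_)
    change (G 0, (0 : ℝ)) ∈ M.target
    rw [hG0]
    exact hM0t
  obtain ⟨r₁, hr₁, H1⟩ := Metric.eventually_nhds_iff.1 (E1.and E2)
  obtain ⟨r₂, hr₂, H2⟩ := Metric.eventually_nhds_iff.1 E3
  set r := min 1 (min (r₁ / 2) (r₂ / 2)) with hr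
  have hrp : 0 < r := by positivity
  have hr1 : r ≤ 1 := min_le_left _ _
  have hrr1 : r < r₁ := lt_of_le_of_lt ((min_le_right _ _).trans (min_le_left _ _)) (by linarith)
  have hrr2 : r < r₂ := lt_of_le_of_lt ((min_le_right _ _).trans (min_le_right _ _)) (by linarith)
  have Q1 : ∀ y, |y| ≤ r → K * (5 + 1 / |b|) * (2 / |b|) * cr y ^ 2 < 1 ∧
      γ y ∈ F.target ∩ F.symm ⁻¹' M.source := fun y hy =>
    H1 (by rw [Real.dist_0_eq_abs]; linarith)
  have Q2 : ∀ y y', |y| ≤ r → |y'| ≤ r → (G y, y') ∈ M.target := fun y y' hy hy' =>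
    @H2 (y, y') (by
      rw [dist_zero_right, Prod.norm_def]
      exact max_lt (by simp only [Real.norm_eq_abs]; linarith)
        (by simp only [Real.norm_eq_abs]; linarith))
  have hord : ∀ y₁ y₂, |y₂ - y₁| = |y₂| - |y₁| → |y₁| < |y₂| → |y₂| ≤ r →
      σ * G y₁ < σ * G y₂ := by
    intro y₁ y₂ hs hlt hy2
    have hy1 : |y₁| ≤ r := by linarith
    obtain ⟨-, a1, a2⟩ := Q1 y₁ hy1
    obtain ⟨b0, b1, b2⟩ := Q1 y₂ hy2
    have c1 := Q2 y₁ y₂ hy1 hy2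
    have e : M (M.symm (G y₁, y₂)) = (G y₁, y₂) := M.right_inv c1
    rw [hM] at e
    have e1 := congrArg Prod.fst e
    have e2 := congrArg Prod.snd e
    exact order_key h hb hcb hc hF hU hK hP hσ hs hlt (by linarith) b0
      (hMs a2) (hMs b2) (hMs (M.map_target c1)) (F.right_inv a1) (F.right_inv b1) e1 e2
  have hpos : ∀ y, y ≠ 0 → |y| ≤ r → 0 < σ * G y := by
    intro y hy hyr
    have := hord 0 y (by simp) (by simpa using hy) hyr
    simpa [hG0] using this
  have hGc : ContinuousOn G (Icc (-r) r) := by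
    have : ContinuousOn (fun y => F.symm (γ y)) (Icc (-r) r) :=
      F.continuousOn_symm.comp hγc.continuousOn (fun y hy => (Q1 y (abs_le.2 hy)).2.1)
    exact continuous_snd.comp_continuousOn this
  set k : ℝ → ℝ := fun y => σ * G (max y 0) - σ * G (min y 0) with hk
  have hkc : ContinuousOn k (Icc (-r) r) := by
    have m1 : ContinuousOn (fun y => G (max y 0)) (Icc (-r) r) :=
      hGc.comp (by fun_prop) (fun y hy => ⟨by linarith [le_max_right y 0], max_le hy.2 hrp.le⟩)
    have m2 : ContinuousOn (fun y => G (min y 0)) (Icc (-r) r) :=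
      hGc.comp (by fun_prop) (fun y hy => ⟨le_min hy.1 (by linarith),
        by linarith [min_le_right y 0]⟩)
    exact (continuousOn_const.mul m1).sub (continuousOn_const.mul m2)
  have kpos : ∀ y, 0 ≤ y → k y = σ * G y := fun y hy => by
    simp only [hk]; rw [max_eq_left hy, min_eq_right hy, hG0]; ring
  have kneg : ∀ y, y ≤ 0 → k y = -(σ * G y) := fun y hy => by
    simp only [hk]; rw [max_eq_right hy, min_eq_left hy, hG0]; ring
  have hkm : StrictMonoOn k (Icc (-r) r) := by
    intro y hy y' hy' hlt
    rcases le_or_gt 0 y with h1 | h1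
    · rw [kpos y h1, kpos y' (by linarith)]
      apply hord
      · rw [abs_of_nonneg h1, abs_of_nonneg (by linarith : 0 ≤ y'), abs_of_nonneg (by linarith)]
      · rwa [abs_of_nonneg h1, abs_of_nonneg (by linarith : 0 ≤ y')]
      · exact abs_le.2 hy'
    · rw [kneg y h1.le]
      rcases le_or_gt y' 0 with h2 | h2
      · rw [kneg y' h2, neg_lt_neg_iff]
        apply hord
        · rw [abs_of_nonpos h1.le, abs_of_nonpos h2, abs_of_nonpos (by linarith)]; ring
        · rw [abs_of_nonpos h1.le, abs_of_nonpos h2]; linarith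
        · exact abs_le.2 hy
      · rw [kpos y' h2.le]
        have := hpos y h1.ne (abs_le.2 hy)
        have := hpos y' h2.ne' (abs_le.2 hy')
        linarith
  obtain ⟨H, Hm, Hk⟩ := homeo_ext k r hrp hkc hkm
  obtain ⟨W, Wm, hW⟩ := signed_homeo
  have hη : ∀ y, W ((H.trans W.symm) y) = H y := fun y => by simp
  have hηm : StrictMono (H.trans W.symm) := by
    intro y y' hlt
    rw [← Wm.lt_iff_lt, hη, hη]
    exact Hm hlt
  have hmain : ∀ y, |y| ≤ r → σ * cr ((H.trans W.symm) y) ^ 4 = G y := by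
    intro y hy
    rw [← hW, hη, Hk y (abs_le.1 hy)]
    have h1 : |k y| = σ * G y := by
      have hnn : 0 ≤ σ * G y := by
        by_cases hy0 : y = 0
        · simp [hy0, hG0]
        · exact (hpos y hy0 hy).le
      rcases le_total 0 y with h2 | h2
      · rw [kpos y h2, abs_of_nonneg hnn]
      · rw [kneg y h2, abs_neg, abs_of_nonneg hnn]
    rw [h1, ← mul_assoc]
    rcases hσ with rfl | rfl <;> simp
  refine ⟨r, H.trans W.symm, hrp, hηm, ?_, fun y hy => ⟨(Q1 y hy.le).2.1, (Q1 y hy.le).2.2,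
    hmain y hy.le⟩⟩
  apply W.injective
  rw [hη, Hk 0 ⟨by linarith, hrp.le⟩, kpos 0 le_rfl, hG0, mul_zero]
  have := hW 0
  rw [cr_zero] at this
  have : W 0 = 0 := by simpa using this
  exact this.symm


/-- Tangent case. -/
theorem case_tangent (ε : ℝ) (hε : ε = 1 ∨ ε = -1) (X : ℝ × ℝ → ℝ × ℝ)
    (hX : ContDiffAt ℝ 1 X 0) (b : ℝ) (hX0 : X 0 = (0, b)) (hb : b ≠ 0) :
    OrbitallyEquivAt X (fun z => z.1 ^ 3 + ε * z.2 ^ 4) (0, 0)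
      (fun _ => X 0) (fun z => z.1 ^ 3 + ε * z.2 ^ 4) (0, 0) := by
  have hhd : HasStrictDerivAt (fun s : ℝ => (s, (0 : ℝ))) (1, 0) 0 :=
    (hasStrictDerivAt_id 0).prodMk (hasStrictDerivAt_const 0 0)
  obtain ⟨F, hF, F0, hFd, -⟩ := flowbox X hX (fun s => (s, 0)) (1, 0) hhd rfl (by simpa [hX0] using hb)
  rw [hX0] at hFd
  have hbp : 0 < |b| := abs_pos.2 hb
  set c := min |b| 1 / 2 with hcdef
  have hcp : 0 < c := by positivity
  have hcb : c ≤ |b| / 2 := by rw [hcdef]; gcongr; exact min_le_left _ _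
  have hc : c ≤ 1 / 2 := by rw [hcdef]; gcongr; exact min_le_right _ _
  obtain ⟨s, hs, hap⟩ := hFd.approximates_deriv_on_nhds (c := ⟨c, hcp.le⟩) (Or.inr hcp)
  obtain ⟨L, u, hu, hL⟩ := hX.exists_lipschitzOnWith
  have hFu : F ⁻¹' u ∈ 𝓝 (0 : ℝ × ℝ) :=
    (F.continuousAt hF.zero_mem).preimage_mem_nhds (by rwa [F0])
  obtain ⟨ρ, hρ, hball⟩ := Metric.mem_nhds_iff.1
    (inter_mem (inter_mem hs hFu) (F.open_source.mem_nhds hF.zero_mem))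
  have hA : Approx F b c ρ := fun p hp q hq => hap p (hball hp).1.1 q (hball hq).1.1
  have hU : ball 0 ρ ⊆ F.source := fun p hp => (hball hp).2
  have hK : 0 < (L : ℝ) + 1 := by positivity
  have hP : ∀ p ∈ ball (0 : ℝ × ℝ) ρ, |(X (F p)).1| ≤ (L + 1) * ‖F p‖ := by
    intro p hp
    have h1 := hL.norm_sub_le (hball hp).1.2 (mem_of_mem_nhds hu)
    rw [hX0, sub_zero] at h1
    have h2 := (norm_fst_le (X (F p) - (0, b))).trans h1
    simp only [Prod.fst_sub, sub_zero, Real.norm_eq_abs] at h2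
    linarith [norm_nonneg (F p)]
  have hMd : HasStrictFDerivAt (fun p : ℝ × ℝ => (p.2, (F p).2)) (boxLin (0, b) (1, 0)) 0 := by
    refine (hasStrictFDerivAt_snd.prodMk hFd.snd).congr_fderiv ?_
    ext <;> simp [boxLin]
  obtain ⟨M, hM, hM0s, hMs, -⟩ := strict_homeo _ (0, b) (1, 0) (by simpa using hb) hMd
    (ball 0 ρ) (ball_mem_nhds 0 hρ)
  replace hM : ∀ p, M p = (p.2, (F p).2) := fun p => by rw [hM]
  obtain ⟨r, η, hr, hηm, hη0, hη⟩ := tangent_eta (σ := -ε) hA hb hcb hc hF F0 hU hK hP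
    (by rcases hε with rfl | rfl <;> simp) hM hMs hM0s
  have hηb : ∀ y y', 0 < b * (y' - y) ↔ 0 < b * (η y' - η y) := by
    intro y y'
    rcases lt_or_gt_of_ne hb with h | h
    · rw [← neg_mul_neg, ← neg_mul_neg b (η y' - η y), mul_pos_iff_of_pos_left (by linarith),
        mul_pos_iff_of_pos_left (by linarith), neg_pos, neg_pos, sub_neg, sub_neg, hηm.lt_iff_lt]
    · rw [mul_pos_iff_of_pos_left h, mul_pos_iff_of_pos_left h, sub_pos, sub_pos, hηm.lt_iff_lt]
  set O : Set (ℝ × ℝ) := M.source ∩ M ⁻¹' {z | |z.2| < r} with hO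
  have hOo : IsOpen O := M.isOpen_inter_preimage (isOpen_lt (by fun_prop) continuous_const)
  have hO0 : (0 : ℝ × ℝ) ∈ O := ⟨hM0s, by simp [hM, F0, hr]⟩
  have hOb : O ⊆ ball 0 ρ := fun p hp => hMs hp.1
  have hOr : ∀ p ∈ O, |(F p).2| < r := fun p hp => by
    have := hp.2
    rwa [mem_preimage, hM] at this
  have hF' := hF.restr hOo hO0
  set N := (M.transHomeomorph ((Homeomorph.refl ℝ).prodCongr η)).restrOpen O hOo with hN
  have hNs : N.source = O := by
    rw [hN, OpenPartialHomeomorph.restrOpen_source]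
    exact inter_eq_right.2 inter_subset_left
  have hFs : (F.restrOpen O hOo).source = O := by
    rw [OpenPartialHomeomorph.restrOpen_source]
    exact inter_eq_right.2 (hOb.trans hU)
  have hNp : ∀ p, N p = (p.2, η (F p).2) := by
    intro p
    change ((Homeomorph.refl ℝ).prodCongr η) (M p) = _
    rw [hM]; rfl
  refine combine (hNs.trans hFs.symm) hF' F0 (by rw [hNp, F0]; simp [hη0]) ?_ ?_ ?_
  · intro p hp
    rw [hFs] at hp
    obtain ⟨h1, h2, h3⟩ := hη _ (hOr p hp)
    change (F p).1 ^ 3 + ε * (F p).2 ^ 4 = 0 ↔ _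
    rw [hNp, curve_iff hε]
    simp only
    rw [curve_iff hε, h3]
    constructor
    · intro h4
      rw [← h4, Prod.mk.eta, F.left_inv (hU (hOb hp))]
    · intro h4
      have h5 : M (F.symm (-ε * cr (F p).2 ^ 4, (F p).2)) = M p := by
        rw [hM, hM, F.right_inv h1, ← h4]
      have h6 := M.injOn h2 hp.1 h5
      have h7 := F.right_inv h1
      rw [h6] at h7
      exact congrArg Prod.fst h7
  · intro J d hd
    obtain ⟨hJ, hJn, hdV, hdd⟩ := hd
    obtain ⟨t₁, ht₁⟩ := hJn.nonempty
    have hline : ∀ t ∈ J, d t = d t₁ + (t - t₁) • X 0 := by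
      intro t ht
      have := hJ.convex.norm_image_sub_le_of_norm_hasDerivWithin_le (𝕜 := ℝ)
        (f := fun t => d t - t • X 0) (f' := fun _ => 0) (C := 0) (x := t₁) (y := t) ?_ ?_ ht₁ ht
      · rw [zero_mul, norm_le_zero_iff, sub_eq_zero] at this
        have h2 : d t = d t₁ - t₁ • X 0 + t • X 0 := by rw [← this]; abel
        rw [h2, sub_smul]
        abel
      · intro v hv
        have := (hdd v hv).sub ((hasDerivWithinAt_id v J).smul_const (X 0))
        simp only [one_smul, sub_self] at this
        exact this
      · simp
    set q : ℝ → ℝ × ℝ := fun t => N.symm (d t) with hq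
    have hqO : ∀ t ∈ J, q t ∈ O := fun t ht => hNs ▸ N.map_target (hdV t ht)
    have hqN : ∀ t ∈ J, ((q t).2, η (F (q t)).2) = d t := fun t ht => by
      rw [← hNp]; exact N.right_inv (hdV t ht)
    have hq2 : ∀ t ∈ J, (q t).2 = (d t₁).1 := fun t ht => by
      have := congrArg Prod.fst (hqN t ht)
      simp only at this
      rw [this, hline t ht, hX0]; simp
    have hdc : ContinuousOn d J := fun t ht => (hdd t ht).continuousWithinAt
    have hqc : ContinuousOn q J := N.continuousOn_symm.comp hdc hdV
    have hqe : ∀ t ∈ J, q t = ((q t).1, (d t₁).1) := fun t ht => by rw [← hq2 t ht]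
    refine ⟨(d t₁).1, fun t => (q t).1, continuous_fst.comp_continuousOn hqc, ?_, hqe⟩
    intro t ht t' ht' hlt
    have b1 := hOb (hqO t ht)
    have b2 := hOb (hqO t' ht')
    have e1 := congrArg Prod.snd (hqN t ht)
    have e2 := congrArg Prod.snd (hqN t' ht')
    rw [hqe t ht] at b1 e1
    rw [hqe t' ht'] at b2 e2
    simp only at e1 e2 ⊢
    rw [hA.sign hb hcb hc b2 b1, hηb, e1, e2, hline t ht, hline t' ht', hX0]
    simp only [Prod.snd_add, Prod.smul_snd, smul_eq_mul]
    have : b * ((d t₁).2 + (t' - t₁) * b - ((d t₁).2 + (t - t₁) * b)) = b ^ 2 * (t' - t) := by ring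
    rw [this]
    have : 0 < t' - t := by linarith
    positivity
  · intro J t₀ s₀ hJ
    rw [hFs] at hJ
    refine ⟨fun u => (s₀, b * u), fun t => η (F (t + t₀, s₀)).2 / b, ?_, ?_, ?_, ?_⟩
    · have h1 : ContinuousOn (fun t => F (t + t₀, s₀)) J :=
        F.continuousOn.comp (by fun_prop) (fun t ht => hU (hOb (hJ t ht)))
      exact (η.continuous.comp_continuousOn (continuous_snd.comp_continuousOn h1)).div_const b
    · intro t ht t' ht' hlt
      have h1 := (hA.sign hb hcb hc (hOb (hJ t' ht')) (hOb (hJ t ht))).1 (by linarith)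
      rw [hηb] at h1
      simp only
      rw [← sub_pos, ← sub_div]
      have : (η (F (t' + t₀, s₀)).2 - η (F (t + t₀, s₀)).2) / b =
          b * (η (F (t' + t₀, s₀)).2 - η (F (t + t₀, s₀)).2) / b ^ 2 := by field_simp
      rw [this]
      positivity
    · intro t ht
      rw [hNp]
      simp only
      rw [mul_div_cancel₀ _ hb]
    · intro t ht
      simp only
      rw [hX0]
      have := ((hasDerivAt_id (η (F (t + t₀, s₀)).2 / b)).const_mul b)
      rw [mul_one] at this
      exact (hasDerivAt_const _ s₀).prodMk this

end E6Aux

/-- (`E₆`-type impasse curve.)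
If `δ(x,y) = x³ + ε·y⁴` and `X = (P,Q)` is real-analytic near the origin with
`(P(0,0), Q(0,0)) ≠ (0,0)`, then without further assumptions on the Taylor expansion of `X`,
`(X, δ)` is orientation-preserving `C⁰`-orbitally equivalent at the origin to the system with
constant adjoint vector field `(P(0,0), Q(0,0))`. -/
theorem E6_case (ε : ℝ) (hε : ε = 1 ∨ ε = -1)
    (P Q : ℝ × ℝ → ℝ)
    (hP : AnalyticAt ℝ P (0, 0)) (hQ : AnalyticAt ℝ Q (0, 0))
    (hX0 : (P (0, 0), Q (0, 0)) ≠ ((0 : ℝ), (0 : ℝ))) :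
    OrbitallyEquivAt (fun z => (P z, Q z))
      (fun z => z.1 ^ 3 + ε * z.2 ^ 4) (0, 0)
      (fun _ => (P (0, 0), Q (0, 0)))
      (fun z => z.1 ^ 3 + ε * z.2 ^ 4) (0, 0) := by
  have hX : ContDiffAt ℝ 1 (fun z => (P z, Q z)) (0 : ℝ × ℝ) :=
    (AnalyticAt.contDiffAt hP).prodMk (AnalyticAt.contDiffAt hQ)
  by_cases h : P (0, 0) = 0
  · have hb : Q (0, 0) ≠ 0 := fun h' => hX0 (by rw [h, h'])
    refine E6Aux.case_tangent ε hε (fun z => (P z, Q z)) hX (Q (0, 0)) ?_ hb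
    change (P (0, 0), Q (0, 0)) = _
    rw [h]
  · exact E6Aux.case_transversal ε hε (fun z => (P z, Q z)) hX h
end

section
/- Let δ(x, y) = x³ + y⁵ (an E₈-type singular impasse curve). Let X = (P, Q) be real-analytic on a neighborhood of the origin in ℝ² with (P(0,0), Q(0,0)) ≠ (0, 0). Then, without any further assumption on the Taylor expansion of X, the constrained system (X, δ) is orientation-preserving C⁰-orbitally equivalent at (0, 0) to the constrained system (Y, δ), where Y is the constant vector field Y ≡ (P(0,0), Q(0,0)). -/
open Set Filter Topology Metric
open scoped NNReal

namespace E8aux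

/-- the curve parametrization -/
def gam (s : ℝ) : ℝ × ℝ := (-s ^ 5, s ^ 3)

def del (z : ℝ × ℝ) : ℝ := z.1 ^ 3 + z.2 ^ 5

lemma del_gam (s : ℝ) : del (gam s) = 0 := by simp only [del, gam]; ring

lemma gam_cont : Continuous gam := by unfold gam; fun_prop

lemma del_cont : Continuous del := by unfold del; fun_prop

lemma gam_inj : Function.Injective gam := by
  intro s r h
  have h2 := (Prod.ext_iff.1 h).2
  exact (Odd.pow_inj (by decide : Odd 3)).1 h2

lemma exists_cbrt (y : ℝ) : ∃ s : ℝ, s ^ 3 = y := by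
  rcases le_total 0 y with h | h
  · exact ⟨y ^ ((3 : ℕ) : ℝ)⁻¹, Real.rpow_inv_natCast_pow h (by norm_num)⟩
  · refine ⟨-((-y) ^ ((3 : ℕ) : ℝ)⁻¹), ?_⟩
    have := Real.rpow_inv_natCast_pow (n := 3) (neg_nonneg.2 h) (by norm_num)
    rw [Odd.neg_pow (by decide), this, neg_neg]

lemma exists_gam {z : ℝ × ℝ} (h : del z = 0) : ∃ s, gam s = z := by
  obtain ⟨s, hs⟩ := exists_cbrt z.2
  refine ⟨s, Prod.ext ?_ hs⟩
  apply (Odd.pow_inj (by decide : Odd 3)).1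
  simp only [del, gam] at *
  rw [← hs] at h
  linear_combination -h

lemma abs_le_of_gam {s η C : ℝ} (hη : 0 ≤ η) (h : ‖gam s‖ ≤ C) (hC : C ≤ η ^ 3) : |s| ≤ η := by
  have h1 : |s ^ 3| ≤ ‖gam s‖ := norm_snd_le (gam s)
  rw [abs_pow] at h1
  exact le_of_pow_le_pow_left₀ (by norm_num : 3 ≠ 0) hη (by linarith)

lemma norm_gam_le {s : ℝ} (h : |s| ≤ 1) : ‖gam s‖ ≤ |s| ^ 3 := by
  simp only [gam, Prod.norm_def, Real.norm_eq_abs, abs_neg, abs_pow]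
  exact max_le (pow_le_pow_of_le_one (abs_nonneg _) h (by norm_num)) le_rfl

lemma diff_bounds (s r : ℝ) : (s ^ 2 + r ^ 2) / 2 * |s ^ 3 - r ^ 3| ≤ |s ^ 5 - r ^ 5| ∧
    |s ^ 5 - r ^ 5| ≤ (s ^ 2 + r ^ 2) * |s ^ 3 - r ^ 3| := by
  have e3 : s ^ 3 - r ^ 3 = (s - r) * (s ^ 2 + s * r + r ^ 2) := by ring
  have e5 : s ^ 5 - r ^ 5 = (s - r) * ((s ^ 2 + s * r + r ^ 2) * (s ^ 2 + r ^ 2) - s ^ 2 * r ^ 2) := by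
    ring
  have q : (s ^ 2 + r ^ 2) / 2 ≤ s ^ 2 + s * r + r ^ 2 := by nlinarith [sq_nonneg (s + r)]
  have q0 : 0 ≤ s ^ 2 + s * r + r ^ 2 := le_trans (by positivity) q
  have k : (s ^ 2 + r ^ 2) / 2 * (s ^ 2 + s * r + r ^ 2) ≤
      (s ^ 2 + s * r + r ^ 2) * (s ^ 2 + r ^ 2) - s ^ 2 * r ^ 2 := by
    nlinarith [mul_le_mul_of_nonneg_left q (by positivity : 0 ≤ (s ^ 2 + r ^ 2) / 2),
      sq_nonneg (s ^ 2 - r ^ 2)]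
  have k0 : 0 ≤ (s ^ 2 + s * r + r ^ 2) * (s ^ 2 + r ^ 2) - s ^ 2 * r ^ 2 :=
    le_trans (by positivity) k
  rw [e3, e5, abs_mul, abs_mul, abs_of_nonneg q0, abs_of_nonneg k0]
  have a0 := abs_nonneg (s - r)
  constructor
  · nlinarith [mul_le_mul_of_nonneg_left k a0]
  · have : (s ^ 2 + s * r + r ^ 2) * (s ^ 2 + r ^ 2) - s ^ 2 * r ^ 2 ≤
      (s ^ 2 + s * r + r ^ 2) * (s ^ 2 + r ^ 2) := by nlinarith [sq_nonneg (s * r)]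
    nlinarith [mul_le_mul_of_nonneg_left this a0]

/-- existence of a small parameter -/
lemma small_param {A B : ℝ} (hB : 0 < B) (hA : 0 ≤ A) : ∃ η, 0 < η ∧ η ≤ 1 ∧ A * η < B := by
  refine ⟨min 1 (B / (A + 1)), lt_min one_pos (by positivity), min_le_left _ _, ?_⟩
  calc A * min 1 (B / (A + 1)) ≤ A * (B / (A + 1)) := by gcongr; exact min_le_right _ _
    _ < (A + 1) * (B / (A + 1)) := by
        have : 0 < B / (A + 1) := by positivity
        nlinarith
    _ = B := by field_simp

set_option maxHeartbeats 1000000 in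
lemma cross_real {K L a b : ℝ} (hK : 0 ≤ K) (hL : 0 ≤ L) (hab : a ≠ 0 ∨ b ≠ 0) :
    ∃ η, 0 < η ∧ η ≤ 1 ∧ ∀ r s h : ℝ, |r| ≤ η → |s| ≤ η → |h| ≤ η →
      |(s ^ 3 - r ^ 3) - h * b| ≤ |h| * (K * (|r| ^ 3 + L * |h|)) →
      |(-s ^ 5 - -r ^ 5) - h * a| ≤ |h| * (K * (|r| ^ 3 + L * |h|)) → h = 0 := by
  by_cases ha : a = 0
  · have hb : b ≠ 0 := by tauto
    have hb' : 0 < |b| := abs_pos.2 hb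
    obtain ⟨η, h0, h1, h2⟩ := small_param (A := K * (1 + L) * 2 + 4 * K * (1 + 2 * L * (2 / |b|)))
      (B := |b|) hb' (by positivity)
    refine ⟨η, h0, h1, fun r s h hr hs hh e3 e5 => ?_⟩
    subst ha
    by_contra hne
    have hp : 0 < |h| := abs_pos.2 hne
    have hrn := abs_nonneg r
    have hsn := abs_nonneg s
    set e := K * (|r| ^ 3 + L * |h|) with he
    have r3 : |r| ^ 3 ≤ η := by
      calc |r| ^ 3 ≤ η ^ 3 := by gcongr
        _ ≤ η ^ 1 := pow_le_pow_of_le_one h0.le h1 (by norm_num)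
        _ = η := pow_one _
    have e1 : e ≤ K * (1 + L) * η := by
      calc e ≤ K * (η + L * η) := by rw [he]; gcongr
        _ = _ := by ring
    have x1 : 0 ≤ 4 * K * (1 + 2 * L * (2 / |b|)) * η := by positivity
    have x2 : 0 ≤ K * (1 + L) * 2 * η := by positivity
    have e2 : e ≤ |b| / 2 := by nlinarith
    have d3 : |h| * (|b| / 2) ≤ |s ^ 3 - r ^ 3| := by
      have := abs_sub_abs_le_abs_sub (h * b) (s ^ 3 - r ^ 3)
      rw [abs_sub_comm (h * b), abs_mul] at this
      nlinarith
    have d5 : |s ^ 5 - r ^ 5| ≤ |h| * e := by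
      rw [mul_zero, sub_zero, show -s ^ 5 - -r ^ 5 = -(s ^ 5 - r ^ 5) by ring, abs_neg] at e5
      exact e5
    have db := (diff_bounds s r).1
    have k1 : (s ^ 2 + r ^ 2) / 2 * (|b| / 2) ≤ e := by
      have : (s ^ 2 + r ^ 2) / 2 * (|h| * (|b| / 2)) ≤ |h| * e :=
        le_trans (mul_le_mul_of_nonneg_left d3 (by positivity)) (db.trans d5)
      nlinarith
    have t3 : |s ^ 3 - r ^ 3| ≤ |s| ^ 3 + |r| ^ 3 := by
      have := abs_sub (s ^ 3) (r ^ 3)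
      rwa [abs_pow, abs_pow] at this
    have hs3 : |s| ^ 3 ≤ η * s ^ 2 := by
      rw [← sq_abs s]; nlinarith [mul_le_mul_of_nonneg_right hs (sq_nonneg |s|)]
    have hr3 : |r| ^ 3 ≤ η * r ^ 2 := by
      rw [← sq_abs r]; nlinarith [mul_le_mul_of_nonneg_right hr (sq_nonneg |r|)]
    have hhb : |h| ≤ (2 / |b|) * (η * (s ^ 2 + r ^ 2)) := by
      have : |h| * (|b| / 2) ≤ η * (s ^ 2 + r ^ 2) := by nlinarith
      calc |h| = (2 / |b|) * (|h| * (|b| / 2)) := by field_simp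
        _ ≤ _ := by gcongr
    have hpos : 0 < s ^ 2 + r ^ 2 := by
      by_contra hc
      have : s ^ 2 + r ^ 2 = 0 := le_antisymm (not_lt.1 hc) (by positivity)
      rw [this] at hhb
      simp only [mul_zero] at hhb
      linarith
    have ee : e ≤ K * (η * (s ^ 2 + r ^ 2) + L * ((2 / |b|) * (η * (s ^ 2 + r ^ 2)))) := by
      rw [he]
      gcongr
      nlinarith [sq_nonneg s]
    have fin : |b| * (s ^ 2 + r ^ 2) ≤
        4 * K * (1 + L * (2 / |b|)) * η * (s ^ 2 + r ^ 2) := by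
      have y1 : K * (η * (s ^ 2 + r ^ 2) + L * ((2 / |b|) * (η * (s ^ 2 + r ^ 2)))) =
        K * (1 + L * (2 / |b|)) * η * (s ^ 2 + r ^ 2) := by ring
      rw [y1] at ee
      linarith
    have fin2 := le_of_mul_le_mul_right fin hpos
    have x3 : 0 ≤ 4 * (K * (L * (2 / |b|)) * η) := by positivity
    have x4 : (K * (1 + L) * 2 + 4 * K * (1 + 2 * L * (2 / |b|))) * η =
      K * (1 + L) * 2 * η + 4 * K * (1 + L * (2 / |b|)) * η + 4 * (K * (L * (2 / |b|)) * η) := by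
      ring
    rw [x4] at h2
    linarith
  · have ha' : 0 < |a| := abs_pos.2 ha
    obtain ⟨η, h0, h1, h2⟩ := small_param
      (A := K * (1 + L) + 2 * (|b| + K * (1 + L))) (B := |a|) ha' (by positivity)
    refine ⟨η, h0, h1, fun r s h hr hs hh e3 e5 => ?_⟩
    by_contra hne
    have hp : 0 < |h| := abs_pos.2 hne
    have hrn := abs_nonneg r
    have hsn := abs_nonneg s
    set e := K * (|r| ^ 3 + L * |h|) with he
    have r3 : |r| ^ 3 ≤ η := by
      calc |r| ^ 3 ≤ η ^ 3 := by gcongr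
        _ ≤ η ^ 1 := pow_le_pow_of_le_one h0.le h1 (by norm_num)
        _ = η := pow_one _
    have e1 : e ≤ K * (1 + L) * η := by
      calc e ≤ K * (η + L * η) := by rw [he]; gcongr
        _ = _ := by ring
    have e1' : e ≤ K * (1 + L) := e1.trans (mul_le_of_le_one_right (by positivity) h1)
    have e0 : 0 ≤ e := by positivity
    have d5 : |h| * (|a| - e) ≤ |s ^ 5 - r ^ 5| := by
      rw [show -s ^ 5 - -r ^ 5 = -(s ^ 5 - r ^ 5) by ring] at e5
      have := abs_sub_abs_le_abs_sub (h * a) (-(s ^ 5 - r ^ 5))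
      rw [abs_sub_comm (h * a), abs_mul, abs_neg] at this
      nlinarith
    have d3 : |s ^ 3 - r ^ 3| ≤ |h| * (|b| + e) := by
      have := abs_sub_abs_le_abs_sub (s ^ 3 - r ^ 3) (h * b)
      rw [abs_mul] at this
      nlinarith
    have hs2 : s ^ 2 ≤ η := by
      rw [← sq_abs]
      nlinarith [mul_le_mul hs hs hsn h0.le]
    have hr2 : r ^ 2 ≤ η := by
      rw [← sq_abs]
      nlinarith [mul_le_mul hr hr hrn h0.le]
    have d35 : |s ^ 5 - r ^ 5| ≤ 2 * η * (|h| * (|b| + e)) := by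
      refine (diff_bounds s r).2.trans ?_
      gcongr
      linarith
    have : |h| * (|a| - e) ≤ |h| * (2 * η * (|b| + e)) := by linarith
    have := le_of_mul_le_mul_left this hp
    have x : η * e ≤ η * (K * (1 + L)) := by gcongr
    nlinarith

lemma sign_real {C a b : ℝ} (hC : 0 ≤ C) (hab : a ≠ 0 ∨ b ≠ 0) :
    ∃ σ h₀ : ℝ, 0 < h₀ ∧ ∀ h, 0 < h → h ≤ h₀ → ∀ p q : ℝ, |p - a| ≤ C * h → |q - b| ≤ C * h →
      0 < σ * (p ^ 3 + h ^ 2 * q ^ 5) := by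
  by_cases ha : a = 0
  · have hb : b ≠ 0 := by tauto
    subst ha
    have cont : ContinuousAt (fun w : ℝ × ℝ => b * (w.1 + w.2 ^ 5)) (0, b) := by fun_prop
    have pos : 0 < b * ((0 : ℝ) + b ^ 5) := by
      have : b * ((0 : ℝ) + b ^ 5) = (b ^ 2) ^ 3 := by ring
      rw [this]; positivity
    obtain ⟨ρ, hρ, H⟩ := Metric.eventually_nhds_iff.1 (cont.eventually (lt_mem_nhds pos))
    obtain ⟨η, h0, h1, h2⟩ := small_param (A := C ^ 3 + C) (B := ρ) hρ (by positivity)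
    refine ⟨b, η, h0, fun h hp hh p q hpa hq => ?_⟩
    rw [sub_zero] at hpa
    have hCη : C * h ≤ C * η := by gcongr
    have hC3 : C ^ 3 * h ≤ C ^ 3 * η := by gcongr
    have c1 : 0 ≤ C * h := by positivity
    have c2 : 0 ≤ C ^ 3 * h := by positivity
    have := @H (p ^ 3 / h ^ 2, q) (by
      rw [Prod.dist_eq, max_lt_iff]
      constructor
      · simp only [Real.dist_eq, sub_zero]
        rw [abs_div, abs_pow, abs_pow, abs_of_pos hp, div_lt_iff₀ (by positivity)]
        calc |p| ^ 3 ≤ (C * h) ^ 3 := by gcongr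
          _ = C ^ 3 * h * h ^ 2 := by ring
          _ < ρ * h ^ 2 := by gcongr; linarith
      · simp only [Real.dist_eq]
        linarith)
    simp only at this
    have e : b * (p ^ 3 + h ^ 2 * q ^ 5) = h ^ 2 * (b * (p ^ 3 / h ^ 2 + q ^ 5)) := by
      field_simp
    rw [e]; positivity
  · have cont : ContinuousAt (fun w : ℝ × ℝ × ℝ => a * (w.1 ^ 3 + w.2.2 ^ 2 * w.2.1 ^ 5)) (a, b, 0) := by
      fun_prop
    have pos : 0 < a * (a ^ 3 + (0 : ℝ) ^ 2 * b ^ 5) := by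
      have : a * (a ^ 3 + (0 : ℝ) ^ 2 * b ^ 5) = (a ^ 2) ^ 2 := by ring
      rw [this]; positivity
    obtain ⟨ρ, hρ, H⟩ := Metric.eventually_nhds_iff.1 (cont.eventually (lt_mem_nhds pos))
    obtain ⟨η, h0, h1, h2⟩ := small_param (A := C + 1) (B := ρ) hρ (by positivity)
    refine ⟨a, η, h0, fun h hp hh p q hpa hq => ?_⟩
    have hCη : C * h ≤ C * η := by gcongr
    have c1 : 0 ≤ C * η := by positivity
    exact @H (p, q, h) (by
      rw [Prod.dist_eq, max_lt_iff, Prod.dist_eq, max_lt_iff]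
      simp only [Real.dist_eq, sub_zero, abs_of_pos hp]
      refine ⟨?_, ?_, ?_⟩ <;> linarith)

/-! ### ODE -/

/-- solution on a set -/
def IsSol (X : ℝ × ℝ → ℝ × ℝ) (S : Set ℝ) (f : ℝ → ℝ × ℝ) : Prop :=
  ∀ t ∈ S, HasDerivWithinAt f (X (f t)) S t

lemma IsSol.mono {X : ℝ × ℝ → ℝ × ℝ} {S T : Set ℝ} {f : ℝ → ℝ × ℝ} (h : IsSol X S f) (hT : T ⊆ S) :
    IsSol X T f := fun t ht => (h t (hT ht)).mono hT

lemma IsSol.shift {X : ℝ × ℝ → ℝ × ℝ} {S T : Set ℝ} {f : ℝ → ℝ × ℝ} (h : IsSol X S f) (k : ℝ)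
    (hT : ∀ t ∈ T, k + t ∈ S) : IsSol X T (fun t => f (k + t)) := by
  intro t ht
  have h1 := h _ (hT t ht)
  have h2 : HasDerivWithinAt (fun t : ℝ => k + t) 1 T t := (hasDerivWithinAt_id t T).const_add k
  have := HasDerivWithinAt.scomp t h1 h2 hT
  simpa [Function.comp_def] using this

lemma IsSol.uniq {X : ℝ × ℝ → ℝ × ℝ} {K : ℝ≥0} (hX : LipschitzWith K X) {p q : ℝ}
    {f g : ℝ → ℝ × ℝ} (hf : IsSol X (uIcc p q) f) (hg : IsSol X (uIcc p q) g) (h : f p = g p) :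
    f q = g q := by
  rcases le_total p q with hpq | hpq
  · rw [uIcc_of_le hpq] at hf hg
    have key : ∀ f : ℝ → ℝ × ℝ, IsSol X (Icc p q) f →
        ∀ t ∈ Ico p q, HasDerivWithinAt f (X (f t)) (Ici t) t := fun f hf t ht =>
      (hf t (Ico_subset_Icc_self ht)).mono_of_mem_nhdsWithin (Icc_mem_nhdsGE_of_mem ht)
    exact ODE_solution_unique_of_mem_Icc_right (v := fun _ => X) (s := fun _ => univ)
      (fun t _ => hX.lipschitzOnWith) (fun t ht => (hf t ht).continuousWithinAt)
      (key f hf) (fun _ _ => mem_univ _) (fun t ht => (hg t ht).continuousWithinAt)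
      (key g hg) (fun _ _ => mem_univ _) h (right_mem_Icc.2 hpq)
  · rw [uIcc_of_ge hpq] at hf hg
    have key : ∀ f : ℝ → ℝ × ℝ, IsSol X (Icc q p) f →
        ∀ t ∈ Ioc q p, HasDerivWithinAt f (X (f t)) (Iic t) t := fun f hf t ht =>
      (hf t (Ioc_subset_Icc_self ht)).mono_of_mem_nhdsWithin (Icc_mem_nhdsLE_of_mem ht)
    exact ODE_solution_unique_of_mem_Icc_left (v := fun _ => X) (s := fun _ => univ)
      (fun t _ => hX.lipschitzOnWith) (fun t ht => (hf t ht).continuousWithinAt)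
      (key f hf) (fun _ _ => mem_univ _) (fun t ht => (hg t ht).continuousWithinAt)
      (key g hg) (fun _ _ => mem_univ _) h (left_mem_Icc.2 hpq)

lemma IsSol.speed {X : ℝ × ℝ → ℝ × ℝ} {L : ℝ} (hL : ∀ z, ‖X z‖ ≤ L) {h : ℝ}
    {f : ℝ → ℝ × ℝ} (hf : IsSol X (uIcc 0 h) f) : ‖f h - f 0‖ ≤ L * |h| := by
  have := Convex.norm_image_sub_le_of_norm_hasDerivWithin_le (f := f) (C := L)
    (fun t ht => hf t ht) (fun t _ => hL _) (convex_uIcc 0 h) left_mem_uIcc right_mem_uIcc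
  simpa using this

lemma IsSol.approx {X : ℝ × ℝ → ℝ × ℝ} {K : ℝ≥0} (hX : LipschitzWith K X) {L : ℝ} (hL0 : 0 ≤ L)
    (hL : ∀ z, ‖X z‖ ≤ L) {h : ℝ}
    {f : ℝ → ℝ × ℝ} (hf : IsSol X (uIcc 0 h) f) :
    ‖f h - f 0 - h • X 0‖ ≤ |h| * (K * (‖f 0‖ + L * |h|)) := by
  have := Convex.norm_image_sub_le_of_norm_hasDerivWithin_le (f := fun t => f t - t • X 0)
    (f' := fun t => X (f t) - (1 : ℝ) • X 0)
    (C := K * (‖f 0‖ + L * |h|)) (s := uIcc 0 h) (x := 0) (y := h)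
    (fun t ht => (hf t ht).sub ((hasDerivWithinAt_id t _).smul_const (X 0))) (fun t ht => by
      have h1 := (hf.mono (uIcc_subset_uIcc_left ht)).speed hL
      have h2 : |t| ≤ |h| := by
        have := abs_sub_left_of_mem_uIcc ht
        simpa using this
      have h3 := hX.dist_le_mul (f t) 0
      rw [dist_eq_norm, dist_eq_norm, sub_zero] at h3
      rw [one_smul]
      refine h3.trans ?_
      gcongr
      have h4 := norm_sub_norm_le (f t) (f 0)
      have : L * |t| ≤ L * |h| := by gcongr
      linarith) (convex_uIcc 0 h) left_mem_uIcc right_mem_uIcc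
  simp only [zero_smul, sub_zero, Real.norm_eq_abs] at this
  rw [show f h - f 0 - h • X 0 = f h - h • X 0 - f 0 by abel, mul_comm |h|]
  exact this

/-- flow box adapted to the curve -/
structure IsBox (X : ℝ × ℝ → ℝ × ℝ) (F : ℝ × ℝ → ℝ × ℝ) (ε : ℝ) : Prop where
  cont : ContinuousOn F (Icc (-ε) ε ×ˢ Icc (-ε) ε)
  inj : InjOn F (Icc (-ε) ε ×ˢ Icc (-ε) ε)
  nhds : ∀ η, 0 < η → η ≤ ε → F '' (Icc (-η) η ×ˢ Icc (-η) η) ∈ 𝓝 (0 : ℝ × ℝ)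
  zero : F (0, 0) = 0
  imp : ∀ s ∈ Icc (-ε) ε, ∀ t ∈ Icc (-ε) ε, (del (F (s, t)) = 0 ↔ t = 0)
  sol : ∀ s ∈ Icc (-ε) ε, IsSol X (Icc (-ε) ε) (fun t => F (s, t))

lemma IsBox.mono {X F : ℝ × ℝ → ℝ × ℝ} {ε ε' : ℝ} (h : IsBox X F ε) (hε : ε' ≤ ε) :
    IsBox X F ε' := by
  have hs : Icc (-ε') ε' ⊆ Icc (-ε) ε := Icc_subset_Icc (neg_le_neg hε) hε
  exact ⟨h.cont.mono (prod_mono hs hs), h.inj.mono (prod_mono hs hs),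
    fun η h0 h1 => h.nhds η h0 (h1.trans hε), h.zero,
    fun s hs' t ht => h.imp s (hs hs') t (hs ht), fun s hs' => (h.sol s (hs hs')).mono hs⟩

lemma exists_flow {X : ℝ × ℝ → ℝ × ℝ} {K L : ℝ≥0} (hX : LipschitzWith K X)
    (hL : ∀ z, ‖X z‖ ≤ L) : ∃ φ : (ℝ × ℝ) × ℝ → ℝ × ℝ,
      (∀ z ∈ closedBall (0 : ℝ × ℝ) 1, φ (z, 0) = z ∧ IsSol X (Icc (-1) 1) (fun t => φ (z, t))) ∧
      ContinuousOn φ (closedBall 0 1 ×ˢ Icc (-1) 1) := by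
  have h0 : (0 : ℝ) ∈ Icc (-1 : ℝ) 1 := by constructor <;> norm_num
  have hp : IsPicardLindelof (fun _ => X) (⟨0, h0⟩ : Icc (-1 : ℝ) 1) (0 : ℝ × ℝ) (L + 1) 1 L K :=
    IsPicardLindelof.of_time_independent (fun x _ => hL x) hX.lipschitzOnWith (by simp)
  obtain ⟨φ, h1, h2⟩ := hp.exists_forall_mem_closedBall_eq_hasDerivWithinAt_continuousOn
  exact ⟨φ, fun z hz => h1 z hz, h2⟩

lemma uIcc_sub_Icc {a b p q : ℝ} (hp : p ∈ Icc a b) (hq : q ∈ Icc a b) : uIcc p q ⊆ Icc a b :=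
  uIcc_subset_Icc hp hq

lemma exists_box {X : ℝ × ℝ → ℝ × ℝ} {K L : ℝ≥0} (hX : LipschitzWith K X)
    (hL : ∀ z, ‖X z‖ ≤ L) (hX0 : X 0 ≠ 0) : ∃ F ε, 0 < ε ∧ IsBox X F ε := by
  obtain ⟨φ, hφ, hφc⟩ := exists_flow hX hL
  have hab : (X 0).1 ≠ 0 ∨ (X 0).2 ≠ 0 := by
    by_contra! h
    exact hX0 (Prod.ext h.1 h.2)
  obtain ⟨η, η0, η1, hcross⟩ := cross_real K.coe_nonneg L.coe_nonneg hab
  -- crossing lemma for the flow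
  have cross : ∀ r s h : ℝ, |r| ≤ η → |s| ≤ η → |h| ≤ η → φ (gam r, h) = gam s → h = 0 := by
    intro r s h hr hs hh he
    have hrb : gam r ∈ closedBall (0 : ℝ × ℝ) 1 := by
      rw [mem_closedBall_zero_iff]
      exact (norm_gam_le (hr.trans η1)).trans (pow_le_one₀ (abs_nonneg _) (hr.trans η1))
    have hh1 := abs_le.1 (hh.trans η1)
    have hsol : IsSol X (uIcc 0 h) (fun t => φ (gam r, t)) :=
      (hφ _ hrb).2.mono (uIcc_sub_Icc (by constructor <;> norm_num) hh1)
    have ap := hsol.approx hX L.coe_nonneg hL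
    simp only [he, (hφ _ hrb).1] at ap
    have ap2 : ‖gam s - gam r - h • X 0‖ ≤ |h| * (K * (|r| ^ 3 + L * |h|)) := by
      refine ap.trans ?_
      have := norm_gam_le (hr.trans η1)
      gcongr
    exact hcross r s h hr hs hh ((norm_snd_le _).trans ap2) ((norm_fst_le _).trans ap2)
  obtain ⟨η', η'0, η'1, hη'⟩ := small_param (A := 1 + L) (B := η ^ 3) (by positivity)
    (by positivity)
  set ε := min η' (η / 2) with hε
  have ε0 : 0 < ε := lt_min η'0 (by linarith)
  have εη : ε ≤ η / 2 := min_le_right _ _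
  have εη' : (1 + L) * ε ≤ η ^ 3 :=
    (mul_le_mul_of_nonneg_left (min_le_left _ _) (by positivity)).trans hη'.le
  have ε1 : ε ≤ 1 / 2 := by linarith
  have hball : ∀ s, |s| ≤ ε → gam s ∈ closedBall (0 : ℝ × ℝ) 1 := by
    intro r hr
    have : |r| ≤ 1 := by linarith
    rw [mem_closedBall_zero_iff]
    exact (norm_gam_le this).trans (pow_le_one₀ (abs_nonneg _) this)
  refine ⟨fun p => φ (gam p.1, p.2), ε, ε0, ?_, ?_, ?_, ?_, ?_, ?_⟩
  · apply hφc.comp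
    · have := gam_cont; fun_prop
    · rintro ⟨s, t⟩ ⟨hs, ht⟩
      exact ⟨hball s (abs_le.2 hs), ⟨by linarith [ht.1], by linarith [ht.2]⟩⟩
  · rintro ⟨s, t⟩ ⟨hs, ht⟩ ⟨r, t'⟩ ⟨hr, ht'⟩ he
    simp only [mem_Icc] at hs ht hr ht' he
    have hs' := abs_le.2 hs
    have hr' := abs_le.2 hr
    have f1 : IsSol X (uIcc 0 (-t)) (fun u => φ (gam s, t + u)) :=
      (hφ _ (hball s hs')).2.shift t (fun u hu => by
        have := uIcc_sub_Icc (a := -ε) (b := ε) ⟨by linarith, by linarith⟩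
          ⟨by linarith, by linarith⟩ hu
        constructor <;> linarith [this.1, this.2])
    have f2 : IsSol X (uIcc 0 (-t)) (fun u => φ (gam r, t' + u)) :=
      (hφ _ (hball r hr')).2.shift t' (fun u hu => by
        have := uIcc_sub_Icc (a := -ε) (b := ε) ⟨by linarith, by linarith⟩
          ⟨by linarith, by linarith⟩ hu
        constructor <;> linarith [this.1, this.2])
    have hu := IsSol.uniq hX f1 f2 (by simpa using he)
    simp only [add_neg_cancel, (hφ _ (hball s hs')).1] at hu
    have h0 := cross r s (t' + -t) (by linarith) (by linarith)
      (abs_le.2 ⟨by linarith, by linarith⟩) hu.symm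
    rw [h0, (hφ _ (hball r hr')).1] at hu
    have := gam_inj hu
    ext
    · exact this
    · simp only; linarith
  · intro κ κ0 κε
    obtain ⟨σ, h₀, h₀0, hsign⟩ := sign_real (C := K * L) (by positivity) hab
    obtain ⟨t₁, t₁0, t₁1, ht₁⟩ := small_param (A := (L : ℝ)) (B := κ ^ 3 / 2) (by positivity)
      (by positivity)
    set t₀ := min t₁ (min h₀ κ) with ht₀
    have t00 : 0 < t₀ := lt_min t₁0 (lt_min h₀0 κ0)
    have t0h : t₀ ≤ h₀ := (min_le_right _ _).trans (min_le_left _ _)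
    have t0κ : t₀ ≤ κ := (min_le_right _ _).trans (min_le_right _ _)
    have t0L : L * t₀ ≤ κ ^ 3 / 2 :=
      (mul_le_mul_of_nonneg_left (min_le_left _ _) (by positivity)).trans ht₁.le
    have z0 : (0 : ℝ × ℝ) ∈ closedBall (0 : ℝ × ℝ) 1 := mem_closedBall_self (by norm_num)
    have est : ∀ h, |h| = t₀ → |(φ (0, h)).1 - h * (X 0).1| ≤ |h| * (K * (L * |h|)) ∧
        |(φ (0, h)).2 - h * (X 0).2| ≤ |h| * (K * (L * |h|)) := by
      intro h hh
      have hh1 : h ∈ Icc (-1 : ℝ) 1 := abs_le.1 (by linarith)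
      have hsol : IsSol X (uIcc 0 h) (fun t => φ (0, t)) :=
        (hφ _ z0).2.mono (uIcc_sub_Icc (by constructor <;> norm_num) hh1)
      have ap := hsol.approx hX L.coe_nonneg hL
      simp only [(hφ _ z0).1, norm_zero, zero_add, sub_zero] at ap
      exact ⟨(norm_fst_le _).trans ap, (norm_snd_le _).trans ap⟩
    have sgn : ∀ h, |h| = t₀ → 0 < σ * (del (φ (0, h)) / h ^ 3) := by
      intro h hh
      have hne : h ≠ 0 := by rintro rfl; simp at hh; linarith
      have key : ∀ x a : ℝ, |x - h * a| ≤ |h| * (K * (L * |h|)) → |x / h - a| ≤ K * L * |h| := by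
        intro x a hx
        have : x / h - a = (x - h * a) / h := by field_simp
        rw [this, abs_div, div_le_iff₀ (abs_pos.2 hne)]
        linarith
      have := hsign |h| (by linarith) (by linarith) _ _ (key _ _ (est h hh).1)
        (key _ _ (est h hh).2)
      rw [sq_abs] at this
      convert this using 2
      simp only [del]
      field_simp
    have spos : 0 < σ * del (φ (0, t₀)) := by
      have := sgn t₀ (abs_of_pos t00)
      have e : σ * del (φ (0, t₀)) = σ * (del (φ (0, t₀)) / t₀ ^ 3) * t₀ ^ 3 := by field_simp
      rw [e]; positivity
    have sneg : σ * del (φ (0, -t₀)) < 0 := by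
      have := sgn (-t₀) (by rw [abs_neg]; exact abs_of_pos t00)
      have e : σ * del (φ (0, -t₀)) = -(σ * (del (φ (0, -t₀)) / (-t₀) ^ 3) * t₀ ^ 3) := by
        field_simp
      rw [e]
      have : 0 < σ * (del (φ (0, -t₀)) / (-t₀) ^ 3) * t₀ ^ 3 := by positivity
      linarith
    have contz : ∀ h ∈ Icc (-1 : ℝ) 1, ContinuousAt (fun z => σ * del (φ (z, h))) 0 := by
      intro h hh
      have : ContinuousOn (fun z => φ (z, h)) (closedBall 0 1) :=
        hφc.comp (by fun_prop) (fun z hz => ⟨hz, hh⟩)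
      have := this.continuousAt (closedBall_mem_nhds _ (by norm_num))
      exact continuousAt_const.mul (del_cont.continuousAt.comp this)
    have t01 : t₀ ∈ Icc (-1 : ℝ) 1 := ⟨by linarith, by linarith⟩
    have t01' : -t₀ ∈ Icc (-1 : ℝ) 1 := ⟨by linarith, by linarith⟩
    have ev1 := (contz _ t01).eventually (lt_mem_nhds spos)
    have ev2 := (contz _ t01').eventually (gt_mem_nhds sneg)
    have ev3 : ∀ᶠ z in 𝓝 (0 : ℝ × ℝ), z ∈ closedBall (0 : ℝ × ℝ) (min 1 (κ ^ 3 / 2)) :=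
      closedBall_mem_nhds _ (by positivity)
    filter_upwards [ev1, ev2, ev3] with z hz1 hz2 hz3
    rw [mem_closedBall_zero_iff, le_min_iff] at hz3
    have hzb : z ∈ closedBall (0 : ℝ × ℝ) 1 := mem_closedBall_zero_iff.2 hz3.1
    have hsolz := (hφ z hzb).2
    have sub : Icc (-t₀) t₀ ⊆ Icc (-1 : ℝ) 1 := Icc_subset_Icc (by linarith) (by linarith)
    have contt : ContinuousOn (fun t => σ * del (φ (z, t))) (Icc (-t₀) t₀) := by
      have : ContinuousOn (fun t => φ (z, t)) (Icc (-t₀) t₀) :=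
        fun t ht => ((hsolz t (sub ht)).mono sub).continuousWithinAt
      exact continuousOn_const.mul (del_cont.comp_continuousOn this)
    obtain ⟨u, hu, hu0⟩ := intermediate_value_Icc (by linarith : -t₀ ≤ t₀) contt
      ⟨hz2.le, hz1.le⟩
    have σ0 : σ ≠ 0 := by rintro rfl; simp at spos
    have hdel : del (φ (z, u)) = 0 := by
      rcases mul_eq_zero.1 hu0 with h | h
      · exact absurd h σ0
      · exact h
    obtain ⟨s, hs⟩ := exists_gam hdel
    have hu1 := sub hu
    have sp := (hsolz.mono (uIcc_sub_Icc (by constructor <;> norm_num) hu1) :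
      IsSol X (uIcc 0 u) _).speed hL
    simp only [(hφ z hzb).1] at sp
    have hut : |u| ≤ t₀ := abs_le.2 hu
    have hgs : ‖gam s‖ ≤ κ ^ 3 := by
      rw [hs]
      have h1 := norm_sub_norm_le (φ (z, u)) z
      have h2 : L * |u| ≤ L * t₀ := by gcongr
      linarith [hz3.2]
    have hsκ : |s| ≤ κ := abs_le_of_gam κ0.le hgs le_rfl
    refine ⟨(s, -u), ⟨abs_le.1 hsκ, abs_le.1 (by rw [abs_neg]; linarith)⟩, ?_⟩
    have hsb := hball s (hsκ.trans κε)
    have f1 : IsSol X (uIcc 0 (-u)) (fun v => φ (gam s, v)) :=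
      (hφ _ hsb).2.mono (uIcc_sub_Icc (by constructor <;> norm_num)
        ⟨by linarith [hu1.2], by linarith [hu1.1]⟩)
    have f2 : IsSol X (uIcc 0 (-u)) (fun v => φ (z, u + v)) :=
      hsolz.shift u (fun v hv => by
        have := uIcc_sub_Icc (a := -t₀) (b := t₀) ⟨by linarith, by linarith⟩
          ⟨by linarith [hu.2], by linarith [hu.1]⟩ hv
        constructor <;> linarith [this.1, this.2, hu.1, hu.2])
    have := IsSol.uniq hX f1 f2 (by simp only [add_zero, (hφ _ hsb).1]; exact hs)
    simp only [add_neg_cancel, (hφ z hzb).1] at this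
    exact this
  · have : gam 0 = 0 := by simp [gam]
    simp only
    rw [(hφ _ (hball 0 (by simpa using ε0.le))).1, this]
  · intro s hs t ht
    have hs' := abs_le.2 hs
    have hsb := hball s hs'
    simp only
    constructor
    · intro h
      obtain ⟨r, hr⟩ := exists_gam h
      have ht1 : t ∈ Icc (-1 : ℝ) 1 := ⟨by linarith [ht.1], by linarith [ht.2]⟩
      have sp := ((hφ _ hsb).2.mono (uIcc_sub_Icc (by constructor <;> norm_num) ht1) :
        IsSol X (uIcc 0 t) _).speed hL
      simp only [(hφ _ hsb).1] at sp
      have hta := abs_le.2 ht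
      have hr3 : ‖gam r‖ ≤ (1 + L) * ε := by
        rw [hr]
        have h1 := norm_sub_norm_le (φ (gam s, t)) (gam s)
        have h2 : L * |t| ≤ L * ε := by gcongr
        have h3 : ‖gam s‖ ≤ ε := by
          refine (norm_gam_le (by linarith)).trans ?_
          calc |s| ^ 3 ≤ |s| ^ 1 :=
                pow_le_pow_of_le_one (abs_nonneg _) (by linarith) (by norm_num)
            _ ≤ ε := by rwa [pow_one]
        linarith
      exact cross s r t (by linarith) (abs_le_of_gam η0.le hr3 εη') (by linarith) hr.symm
    · rintro rfl
      rw [(hφ _ hsb).1, del_gam]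
  · intro s hs
    exact (hφ _ (hball s (abs_le.2 hs))).2.mono (Icc_subset_Icc (by linarith) (by linarith))

lemma contOn_invFunOn {F : ℝ × ℝ → ℝ × ℝ} {B : Set (ℝ × ℝ)} (hB : IsCompact B)
    (hF : ContinuousOn F B) (hi : InjOn F B) : ContinuousOn (Function.invFunOn F B) (F '' B) := by
  rw [continuousOn_iff_isClosed]
  intro t ht
  refine ⟨F '' (B ∩ t), ((hB.inter_right ht).image_of_continuousOn
    (hF.mono inter_subset_left)).isClosed, ?_⟩
  ext z
  constructor
  · rintro ⟨h1, p, hp, rfl⟩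
    refine ⟨⟨p, ⟨hp, ?_⟩, rfl⟩, p, hp, rfl⟩
    rwa [mem_preimage, hi.leftInvOn_invFunOn hp] at h1
  · rintro ⟨⟨p, ⟨hp, hpt⟩, rfl⟩, -⟩
    refine ⟨?_, p, hp, rfl⟩
    rwa [mem_preimage, hi.leftInvOn_invFunOn hp]

lemma isOpen_img {F : ℝ × ℝ → ℝ × ℝ} {B N A : Set (ℝ × ℝ)} (hB : IsCompact B)
    (hF : ContinuousOn F B) (hi : InjOn F B) (hN : IsOpen N) (hNB : N ⊆ B) (hA : IsOpen A)
    (hAB : A ⊆ F '' B) : IsOpen (F '' (N ∩ F ⁻¹' A)) := by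
  have h := ((contOn_invFunOn hB hF hi).mono hAB).isOpen_inter_preimage hA hN
  convert h using 1
  ext z
  constructor
  · rintro ⟨p, ⟨hp, hpA⟩, rfl⟩
    refine ⟨hpA, ?_⟩
    rwa [mem_preimage, hi.leftInvOn_invFunOn (hNB hp)]
  · rintro ⟨hz, hz2⟩
    obtain ⟨p, hp, rfl⟩ := hAB hz
    rw [mem_preimage, hi.leftInvOn_invFunOn hp] at hz2
    exact ⟨p, ⟨hz2, hz⟩, rfl⟩

lemma const_of_step {α : Type*} {J : Set ℝ} (hJ : J.OrdConnected) {f : ℝ → α} {η : ℝ} (hη : 0 < η)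
    (h : ∀ t₁ ∈ J, ∀ t₂ ∈ J, t₁ ≤ t₂ → t₂ ≤ t₁ + η → f t₁ = f t₂) :
    ∀ t₁ ∈ J, ∀ t₂ ∈ J, f t₁ = f t₂ := by
  have key : ∀ n : ℕ, ∀ t₁ ∈ J, ∀ t₂ ∈ J, t₁ ≤ t₂ → t₂ ≤ t₁ + n * η → f t₁ = f t₂ := by
    intro n
    induction n with
    | zero =>
      intro t₁ _ t₂ _ h1 h2
      have : t₁ = t₂ := by
        simp only [Nat.cast_zero, zero_mul, add_zero] at h2
        linarith
      rw [this]
    | succ n ih =>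
      intro t₁ h₁ t₂ h₂ h1 h2
      push_cast at h2
      rcases le_total t₂ (t₁ + η) with h3 | h3
      · exact h _ h₁ _ h₂ h1 h3
      · have hm : t₁ + η ∈ J := hJ.out h₁ h₂ ⟨by linarith, h3⟩
        rw [h _ h₁ _ hm (by linarith) le_rfl]
        exact ih _ hm _ h₂ h3 (by linarith)
  have key2 : ∀ t₁ ∈ J, ∀ t₂ ∈ J, t₁ ≤ t₂ → f t₁ = f t₂ := by
    intro t₁ h₁ t₂ h₂ h1
    obtain ⟨n, hn⟩ := exists_nat_ge ((t₂ - t₁) / η)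
    rw [div_le_iff₀ hη] at hn
    exact key n _ h₁ _ h₂ h1 (by linarith)
  intro t₁ h₁ t₂ h₂
  rcases le_total t₁ t₂ with h1 | h1
  · exact key2 _ h₁ _ h₂ h1
  · exact (key2 _ h₂ _ h₁ h1).symm

lemma transfer {X X' Y Y' F G : ℝ × ℝ → ℝ × ℝ} {ε : ℝ} (hε : 0 < ε) {K : ℝ≥0}
    (hX' : LipschitzWith K X')
    (hF : IsBox X' F ε) (hG : IsBox Y' G ε) {N : Set (ℝ × ℝ)}
    (hN : N ⊆ Ioo (-(ε / 2)) (ε / 2) ×ˢ Ioo (-(ε / 2)) (ε / 2))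
    (hXX : ∀ z ∈ F '' N, X z = X' z) (hYY : ∀ z ∈ G '' N, Y z = Y' z)
    (J : Set ℝ) (c : ℝ → ℝ × ℝ)
    (hc : IsPhaseCurve X (F '' N \ {z | z.1 ^ 3 + z.2 ^ 5 = 0}) J c) :
      ∃ (J' : Set ℝ) (d : ℝ → ℝ × ℝ) (τ : ℝ → ℝ),
        IsPhaseCurve Y (G '' N \ {z | z.1 ^ 3 + z.2 ^ 5 = 0}) J' d ∧
        ContinuousOn τ J ∧ StrictMonoOn τ J ∧ τ '' J = J' ∧
        ∀ t ∈ J, G (Function.invFunOn F (Icc (-ε) ε ×ˢ Icc (-ε) ε) (c t)) = d (τ t) := by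
  obtain ⟨hJ, hJn, hcV, hcd⟩ := hc
  have hIoo : Ioo (-(ε / 2)) (ε / 2) ⊆ Icc (-ε) ε := fun x hx =>
    ⟨by linarith [hx.1], by linarith [hx.2]⟩
  have hNB : N ⊆ Icc (-ε) ε ×ˢ Icc (-ε) ε := hN.trans (prod_mono hIoo hIoo)
  have hcN : ∀ t ∈ J, ∃ p ∈ N, F p = c t := fun t ht => (hcV t ht).1
  set I := Function.invFunOn F (Icc (-ε) ε ×ˢ Icc (-ε) ε) with hI
  have hIN : ∀ t ∈ J, I (c t) ∈ N ∧ F (I (c t)) = c t := by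
    intro t ht
    obtain ⟨p, hp, hpc⟩ := hcN t ht
    have : I (c t) = p := by rw [← hpc]; exact hF.inj.leftInvOn_invFunOn (hNB hp)
    rw [this]
    exact ⟨hp, hpc⟩
  have csol : IsSol X' J c := by
    intro t ht
    rw [← hXX _ (hcV t ht).1]
    exact hcd t ht
  have step : ∀ t₁ ∈ J, ∀ t₂ ∈ J, t₁ ≤ t₂ → t₂ ≤ t₁ + ε / 2 →
      (((I (c t₁)).1, (I (c t₁)).2 - t₁) : ℝ × ℝ) = ((I (c t₂)).1, (I (c t₂)).2 - t₂) := by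
    intro t₁ h₁ t₂ h₂ h12 h21
    obtain ⟨n1, e1⟩ := hIN t₁ h₁
    obtain ⟨n2, e2⟩ := hIN t₂ h₂
    set p₁ := I (c t₁) with hp₁
    set p₂ := I (c t₂) with hp₂
    have b1 := hN n1
    have hsub : uIcc t₁ t₂ ⊆ J := by rw [uIcc_of_le h12]; exact hJ.out h₁ h₂
    have gsol : IsSol X' (uIcc t₁ t₂) (fun u => F (p₁.1, (p₁.2 - t₁) + u)) :=
      (hF.sol _ (hNB n1).1).shift (p₁.2 - t₁) (fun u hu => by
        rw [uIcc_of_le h12] at hu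
        constructor <;> linarith [hu.1, hu.2, b1.2.1, b1.2.2])
    have := IsSol.uniq hX' (csol.mono hsub) gsol (by simp [e1])
    rw [← e2] at this
    have hmem : (p₁.1, p₁.2 - t₁ + t₂) ∈ Icc (-ε) ε ×ˢ Icc (-ε) ε := ⟨(hNB n1).1, by
      constructor <;> simp only <;> linarith [b1.2.1, b1.2.2]⟩
    have := hF.inj (hNB n2) hmem this
    have q1 := (Prod.ext_iff.1 this).1
    have q2 := (Prod.ext_iff.1 this).2
    simp only at q1 q2
    ext
    · exact q1.symm
    · simp only; linarith
  have const := const_of_step hJ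
    (f := fun t => (((I (c t)).1, (I (c t)).2 - t) : ℝ × ℝ)) (half_pos hε) step
  refine ⟨J, fun t => G (I (c t)), id, ⟨hJ, hJn, ?_, ?_⟩, continuousOn_id,
    strictMonoOn_id, image_id J, fun t _ => rfl⟩
  · intro t ht
    obtain ⟨n, e⟩ := hIN t ht
    refine ⟨⟨_, n, rfl⟩, fun h => (hcV t ht).2 ?_⟩
    have h2 := (hG.imp _ (hNB n).1 _ (hNB n).2).1 h
    have h3 := (hF.imp _ (hNB n).1 _ (hNB n).2).2 h2
    rw [Prod.mk.eta, e] at h3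
    exact h3
  · intro t ht
    obtain ⟨n, e⟩ := hIN t ht
    simp only
    rw [hYY _ ⟨_, n, rfl⟩]
    have hform : ∀ u ∈ J, I (c u) = ((I (c t)).1, ((I (c t)).2 - t) + u) := by
      intro u hu
      have := const u hu t ht
      have q1 := (Prod.ext_iff.1 this).1
      have q2 := (Prod.ext_iff.1 this).2
      simp only at q1 q2
      ext
      · exact q1
      · simp only; linarith
    have gsol : IsSol Y' J (fun u => G ((I (c t)).1, ((I (c t)).2 - t) + u)) :=
      (hG.sol _ (hNB n).1).shift _ (fun u hu => by
        have := (hNB (hIN u hu).1).2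
        rw [hform u hu] at this
        exact this)
    have h1 := gsol t ht
    simp only [← hform t ht] at h1
    exact h1.congr (fun u hu => by rw [hform u hu]) (by rw [← hform t ht])

lemma equiv_of_box {X X' Y F G : ℝ × ℝ → ℝ × ℝ} {ε : ℝ} (hε : 0 < ε) {K K' : ℝ≥0}
    (hX' : LipschitzWith K X') (hY : LipschitzWith K' Y)
    (hF : IsBox X' F ε) (hG : IsBox Y G ε) {U : Set (ℝ × ℝ)} (hU : IsOpen U) (h0U : 0 ∈ U)
    (hXX : ∀ z ∈ U, X z = X' z) :
    OrbitallyEquivAt X (fun z => z.1 ^ 3 + z.2 ^ 5) (0, 0) Y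
      (fun z => z.1 ^ 3 + z.2 ^ 5) (0, 0) := by
  set O : Set (ℝ × ℝ) := Ioo (-(ε / 2)) (ε / 2) ×ˢ Ioo (-(ε / 2)) (ε / 2) with hO
  set B : Set (ℝ × ℝ) := Icc (-ε) ε ×ˢ Icc (-ε) ε with hBdef
  have hB : IsCompact B := isCompact_Icc.prod isCompact_Icc
  have hIoo : Ioo (-(ε / 2)) (ε / 2) ⊆ Icc (-ε) ε := fun x hx =>
    ⟨by linarith [hx.1], by linarith [hx.2]⟩
  have hOB : O ⊆ B := prod_mono hIoo hIoo
  have hOo : IsOpen O := isOpen_Ioo.prod isOpen_Ioo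
  have hsm : Icc (-(ε / 4)) (ε / 4) ⊆ Ioo (-(ε / 2)) (ε / 2) := fun x hx =>
    ⟨by linarith [hx.1], by linarith [hx.2]⟩
  have hFO : F '' O ∈ 𝓝 (0 : ℝ × ℝ) :=
    mem_of_superset (hF.nhds (ε / 4) (by linarith) (by linarith)) (image_mono (prod_mono hsm hsm))
  have hGO : G '' O ∈ 𝓝 (0 : ℝ × ℝ) :=
    mem_of_superset (hG.nhds (ε / 4) (by linarith) (by linarith)) (image_mono (prod_mono hsm hsm))
  set A₁ := interior (F '' O) ∩ U with hA₁
  set A₂ := interior (G '' O) with hA₂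
  have hA₁o : IsOpen A₁ := isOpen_interior.inter hU
  have hA₂o : IsOpen A₂ := isOpen_interior
  have hA₁B : A₁ ⊆ F '' B :=
    inter_subset_left.trans (interior_subset.trans (image_mono hOB))
  have hA₂B : A₂ ⊆ G '' B := interior_subset.trans (image_mono hOB)
  set N := (O ∩ G ⁻¹' A₂) ∩ F ⁻¹' A₁ with hN
  have hN' : N = (O ∩ F ⁻¹' A₁) ∩ G ⁻¹' A₂ := by rw [hN, inter_right_comm]
  have hNO : N ⊆ O := fun p hp => hp.1.1
  have hNB : N ⊆ B := hNO.trans hOB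
  have hV₁ : IsOpen (F '' N) := isOpen_img hB hF.cont hF.inj
    ((hG.cont.mono hOB).isOpen_inter_preimage hOo hA₂o) (inter_subset_left.trans hOB) hA₁o hA₁B
  have hV₂ : IsOpen (G '' N) := by
    rw [hN']
    exact isOpen_img hB hG.cont hG.inj
      ((hF.cont.mono hOB).isOpen_inter_preimage hOo hA₁o) (inter_subset_left.trans hOB) hA₂o hA₂B
  have h0O : ((0, 0) : ℝ × ℝ) ∈ O := by
    refine ⟨⟨?_, ?_⟩, ⟨?_, ?_⟩⟩ <;> simp only <;> linarith
  have h0N : ((0, 0) : ℝ × ℝ) ∈ N := by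
    refine ⟨⟨h0O, ?_⟩, ?_⟩
    · rw [mem_preimage, hG.zero]; exact mem_interior_iff_mem_nhds.2 hGO
    · rw [mem_preimage, hF.zero]; exact ⟨mem_interior_iff_mem_nhds.2 hFO, h0U⟩
  have lF : ∀ p ∈ N, Function.invFunOn F B (F p) = p := fun p hp =>
    hF.inj.leftInvOn_invFunOn (hNB hp)
  have lG : ∀ p ∈ N, Function.invFunOn G B (G p) = p := fun p hp =>
    hG.inj.leftInvOn_invFunOn (hNB hp)
  have cF : ContinuousOn (Function.invFunOn F B) (F '' N) :=
    (contOn_invFunOn hB hF.cont hF.inj).mono (image_mono hNB)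
  have cG : ContinuousOn (Function.invFunOn G B) (G '' N) :=
    (contOn_invFunOn hB hG.cont hG.inj).mono (image_mono hNB)
  refine ⟨F '' N, G '' N, fun z => G (Function.invFunOn F B z),
    fun z => F (Function.invFunOn G B z), hV₁, hV₂, ⟨_, h0N, hF.zero⟩, ⟨_, h0N, hG.zero⟩,
    ?_, ?_, ?_, ?_, ?_, ?_, ?_, ?_, ?_, ?_⟩
  · refine hG.cont.comp cF ?_
    rintro _ ⟨p, hp, rfl⟩
    rw [lF p hp]; exact hNB hp
  · refine hF.cont.comp cG ?_
    rintro _ ⟨p, hp, rfl⟩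
    rw [lG p hp]; exact hNB hp
  · rintro _ ⟨p, hp, rfl⟩
    simp only [lF p hp]; exact ⟨p, hp, rfl⟩
  · rintro _ ⟨p, hp, rfl⟩
    simp only [lG p hp]; exact ⟨p, hp, rfl⟩
  · rintro _ ⟨p, hp, rfl⟩
    simp only [lF p hp, lG p hp]
  · rintro _ ⟨p, hp, rfl⟩
    simp only [lF p hp, lG p hp]
  · have := lF _ h0N
    rw [hF.zero] at this
    change G (Function.invFunOn F B 0) = 0
    rw [this, hG.zero]
  · have iff : ∀ p ∈ N, (del (F p) = 0 ↔ del (G p) = 0) := fun p hp =>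
      (hF.imp _ (hNB hp).1 _ (hNB hp).2).trans (hG.imp _ (hNB hp).1 _ (hNB hp).2).symm
    ext z
    constructor
    · rintro ⟨_, ⟨h1, p, hp, rfl⟩, rfl⟩
      simp only [lF p hp]
      exact ⟨(iff p hp).1 h1, p, hp, rfl⟩
    · rintro ⟨h1, p, hp, rfl⟩
      exact ⟨F p, ⟨(iff p hp).2 h1, p, hp, rfl⟩, by simp only [lF p hp]⟩
  · intro J c hc
    refine transfer hε hX' hF hG hNO ?_ (fun _ _ => rfl) J c hc
    rintro _ ⟨p, hp, rfl⟩
    exact hXX _ hp.2.2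
  · intro J c hc
    refine transfer hε hY hG hF hNO (fun _ _ => rfl) ?_ J c hc
    rintro _ ⟨p, hp, rfl⟩
    exact hXX _ hp.2.2

lemma exists_ext {X : ℝ × ℝ → ℝ × ℝ} (hX : ContDiffAt ℝ 1 X 0) :
    ∃ (X' : ℝ × ℝ → ℝ × ℝ) (K L : ℝ≥0) (U : Set (ℝ × ℝ)), LipschitzWith K X' ∧
      (∀ z, ‖X' z‖ ≤ L) ∧ IsOpen U ∧ 0 ∈ U ∧ ∀ z ∈ U, X z = X' z := by
  obtain ⟨K, t, ht, hK⟩ := hX.exists_lipschitzOnWith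
  obtain ⟨r, hr, hrt⟩ := Metric.nhds_basis_closedBall.mem_iff.1 ht
  have hle : -r ≤ r := by linarith
  set π : ℝ × ℝ → ℝ × ℝ :=
    fun z => ((projIcc (-r) r hle z.1 : ℝ), (projIcc (-r) r hle z.2 : ℝ)) with hπ
  have hπL : LipschitzWith 1 π := by
    have h1 : LipschitzWith 1 (fun x : ℝ => (projIcc (-r) r hle x : ℝ)) := by
      simpa [Function.comp_def] using LipschitzWith.subtype_val _ |>.comp (LipschitzWith.projIcc hle)
    have h2 := (h1.comp LipschitzWith.prod_fst).prodMk (h1.comp (LipschitzWith.prod_snd (α := ℝ)))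
    simpa [Function.comp_def] using h2
  have hπb : ∀ z, π z ∈ closedBall (0 : ℝ × ℝ) r := by
    intro z
    rw [mem_closedBall_zero_iff, Prod.norm_def]
    exact max_le (abs_le.2 (projIcc (-r) r hle z.1).2) (abs_le.2 (projIcc (-r) r hle z.2).2)
  have hπid : ∀ z ∈ ball (0 : ℝ × ℝ) r, π z = z := by
    intro z hz
    rw [mem_ball_zero_iff] at hz
    have z1 := abs_le.1 ((norm_fst_le z).trans hz.le)
    have z2 := abs_le.1 ((norm_snd_le z).trans hz.le)
    ext
    · simp only [hπ]; rw [projIcc_of_mem hle z1]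
    · simp only [hπ]; rw [projIcc_of_mem hle z2]
  have hlip : LipschitzWith K (X ∘ π) := by
    have := hK.comp hπL.lipschitzOnWith (s := univ) (fun z _ => hrt (hπb z))
    rw [mul_one, lipschitzOnWith_univ] at this
    exact this
  refine ⟨X ∘ π, K, ‖X 0‖₊ + K * r.toNNReal, ball 0 r, hlip, ?_, isOpen_ball, mem_ball_self hr, ?_⟩
  · intro z
    have h0 : (0 : ℝ × ℝ) ∈ t := hrt (mem_closedBall_self hr.le)
    have h1 := hK.dist_le_mul _ (hrt (hπb z)) _ h0
    have h2 := hπb z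
    rw [mem_closedBall] at h2
    rw [dist_eq_norm] at h1
    have h3 := norm_sub_norm_le (X (π z)) (X 0)
    have h4 : K * dist (π z) 0 ≤ K * r := by gcongr
    push_cast
    rw [Real.coe_toNNReal r hr.le]
    simp only [Function.comp_apply]
    linarith
  · intro z hz
    simp only [Function.comp_apply, hπid z hz]

end E8aux

/-- (`E₈`-type impasse curve.)
If `δ(x,y) = x³ + y⁵` and `X = (P,Q)` is real-analytic near the origin with
`(P(0,0), Q(0,0)) ≠ (0,0)`, then without further assumptions on the Taylor expansion of `X`,
`(X, δ)` is orientation-preserving `C⁰`-orbitally equivalent at the origin to the system with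
constant adjoint vector field `(P(0,0), Q(0,0))`. -/
theorem E8_case (P Q : ℝ × ℝ → ℝ)
    (hP : AnalyticAt ℝ P (0, 0)) (hQ : AnalyticAt ℝ Q (0, 0))
    (hX0 : (P (0, 0), Q (0, 0)) ≠ ((0 : ℝ), (0 : ℝ))) :
    OrbitallyEquivAt (fun z => (P z, Q z))
      (fun z => z.1 ^ 3 + z.2 ^ 5) (0, 0)
      (fun _ => (P (0, 0), Q (0, 0)))
      (fun z => z.1 ^ 3 + z.2 ^ 5) (0, 0) := by
  have hX : ContDiffAt ℝ 1 (fun z => (P z, Q z)) (0 : ℝ × ℝ) :=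
    (hP.prod hQ).contDiffAt
  obtain ⟨X', K, L, U, hK, hL, hU, h0U, hXX⟩ := E8aux.exists_ext hX
  have h0 : X' 0 = (P (0, 0), Q (0, 0)) := (hXX 0 h0U).symm
  obtain ⟨F, ε₁, hε₁, hF⟩ := E8aux.exists_box hK hL (by rw [h0]; exact hX0)
  have hY : LipschitzWith 0 (fun _ : ℝ × ℝ => (P (0, 0), Q (0, 0))) := LipschitzWith.const _
  obtain ⟨G, ε₂, hε₂, hG⟩ := E8aux.exists_box (L := ‖(P (0, 0), Q (0, 0))‖₊) hY
    (fun _ => le_rfl) hX0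
  exact E8aux.equiv_of_box (lt_min hε₁ hε₂) hK hY (hF.mono (min_le_left _ _))
    (hG.mono (min_le_right _ _)) hU h0U hXX
end
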